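/- arXiv:1911.08622 — 2 statements merged into one kernel-verified Lean document; each statement's English description precedes it below -/
import Mathlib

section
/- (Moser–Trudinger inequality for the E_{nr} functional.) Let n ≥ 2 and 0 < r < 1, and set δ = (n−1)(1−r)/(nr). There is a constant C, depending only on n and r and not on R, such that for every ball B_R ⊂ ℝ^n and every continuously differentiable function u with compact support contained in B_R, one has ‖u‖_{E_{nr},B_R} ≤ C (log(1 + |B_R|^{−1/(1−r)}))^{−δ} (∫_{B_R} |∇u|^n dx)^{1/n}, where |B_R| is the Lebesgue measure of B_R. -/
open MeasureTheory Metric Filter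
open scoped ENNReal RealInnerProductSpace Topology

noncomputable section

/-- Euclidean space `ℝ^n`. -/
abbrev Euc (n : ℕ) := EuclideanSpace ℝ (Fin n)

/-- The Orlicz function `N_s(t) = ∫_0^t (log(1+τ))^((n-1)/s) dτ`. -/
def NO (n : ℕ) (s t : ℝ) : ℝ :=
  ∫ τ in Set.Ioc (0:ℝ) t, (Real.log (1 + τ)) ^ (((n:ℝ) - 1) / s)

/-- Luxemburg norm `‖f‖_{(N_s),Ω}` (via `Real.sInf`, so an empty set gives junk value 0). -/
def luxNorm (n : ℕ) (s : ℝ) (Ω : Set (Euc n)) (f : Euc n → ℝ) : ℝ :=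
  sInf {lam : ℝ | 0 < lam ∧ (∫ x in Ω, NO n s (|f x| / lam)) ≤ 1}

/-- `f ∈ L log^{(n-1)/s} L(Ω)`, i.e. the Luxemburg norm is finite. -/
def MemLlogL (n : ℕ) (s : ℝ) (Ω : Set (Euc n)) (f : Euc n → ℝ) : Prop :=
  ∃ lam : ℝ, 0 < lam ∧ (∫ x in Ω, NO n s (|f x| / lam)) ≤ 1

/-- `ℝ≥0∞`-valued Luxemburg norm `‖f‖_{(N_s),Ω}` (the infimum of the empty set is `⊤`). -/
def luxNormE (n : ℕ) (s : ℝ) (Ω : Set (Euc n)) (f : Euc n → ℝ) : ℝ≥0∞ :=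
  sInf {L : ℝ≥0∞ | ∃ lam : ℝ, 0 < lam ∧ L = ENNReal.ofReal lam ∧
    (∫ x in Ω, NO n s (|f x| / lam)) ≤ 1}

/-- The exponential functional `‖v‖_{E_s,Ω}` (via `Real.sInf`). -/
def expNorm (n : ℕ) (s : ℝ) (Ω : Set (Euc n)) (v : Euc n → ℝ) : ℝ :=
  sInf {lam : ℝ | 0 < lam ∧
    (∫ x in Ω, (Real.exp (|v x / lam| ^ (s / ((n:ℝ) - 1))) - 1)) ≤ 1}

/-- `ℝ≥0∞`-valued exponential functional `‖v‖_{E_s,Ω}` (empty set gives `⊤`). -/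
def expNormE (n : ℕ) (s : ℝ) (Ω : Set (Euc n)) (v : Euc n → ℝ) : ℝ≥0∞ :=
  sInf {L : ℝ≥0∞ | ∃ lam : ℝ, 0 < lam ∧ L = ENNReal.ofReal lam ∧
    (∫ x in Ω, (Real.exp (|v x / lam| ^ (s / ((n:ℝ) - 1))) - 1)) ≤ 1}

/-- The `L^p` norm over `Ω`. -/
def lpN (n : ℕ) (p : ℝ) (Ω : Set (Euc n)) (f : Euc n → ℝ) : ℝ :=
  (∫ x in Ω, |f x| ^ p) ^ (1/p)

/-- Weak solution of `div 𝒜(x,u,∇u) = ℬ(x,u,∇u)` on `D`:  `u` is differentiable on `D`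
with `∫_D |∇u|^n < ∞`, and the weak formulation holds against all test functions. -/
def IsWeakSolution (n : ℕ) (D : Set (Euc n))
    (AA : Euc n → ℝ → Euc n → Euc n) (BB : Euc n → ℝ → Euc n → ℝ)
    (u : Euc n → ℝ) : Prop :=
  DifferentiableOn ℝ u D ∧
  IntegrableOn (fun x => ‖gradient u x‖ ^ (n:ℝ)) D ∧
  ∀ φ : Euc n → ℝ, ContDiff ℝ (⊤ : ℕ∞) φ → HasCompactSupport φ → tsupport φ ⊆ D →
    (∫ x in D, (⟪gradient φ x, AA x (u x) (gradient u x)⟫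
      + φ x * BB x (u x) (gradient u x))) = 0

/-- The structure conditions, with constant `a > 0` and nonnegative coefficients
`b, c, d, e, f, g ∈ L log^{(n-1)/r} L(D)`. -/
def StructCond (n : ℕ) (r : ℝ) (D : Set (Euc n))
    (AA : Euc n → ℝ → Euc n → Euc n) (BB : Euc n → ℝ → Euc n → ℝ)
    (a : ℝ) (b c d e f g : Euc n → ℝ) : Prop :=
  0 < a ∧
  (∀ x, 0 ≤ b x) ∧ (∀ x, 0 ≤ c x) ∧ (∀ x, 0 ≤ d x) ∧
  (∀ x, 0 ≤ e x) ∧ (∀ x, 0 ≤ f x) ∧ (∀ x, 0 ≤ g x) ∧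
  Measurable b ∧ Measurable c ∧ Measurable d ∧
  Measurable e ∧ Measurable f ∧ Measurable g ∧
  MemLlogL n r D (fun x => b x ^ ((n:ℝ)/((n:ℝ)-1))) ∧
  MemLlogL n r D d ∧
  MemLlogL n r D (fun x => e x ^ ((n:ℝ)/((n:ℝ)-1))) ∧
  MemLlogL n r D f ∧
  MemLlogL n r D g ∧
  MemLlogL n r D (fun x => c x ^ (n:ℝ)) ∧
  ∀ x ∈ D, ∀ (U : ℝ) (p : Euc n),
    ‖AA x U p‖ ≤ a * ‖p‖ ^ ((n:ℝ)-1) + b x * |U| ^ ((n:ℝ)-1) + e x ∧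
    |BB x U p| ≤ c x * ‖p‖ ^ ((n:ℝ)-1) + d x * |U| ^ ((n:ℝ)-1) + f x ∧
    ‖p‖ ^ (n:ℝ) - d x * |U| ^ (n:ℝ) - g x ≤ ⟪p, AA x U p⟫

/-- The barred structure conditions, with constant `a > 0`, `k ≥ 0` and nonnegative
coefficients `b̄, c, d̄` with `b̄^{n/(n-1)}, c^n, d̄ ∈ L log^{(n-1)/r} L(D)`. -/
def BarredStructCond (n : ℕ) (r : ℝ) (D : Set (Euc n))
    (AA : Euc n → ℝ → Euc n → Euc n) (BB : Euc n → ℝ → Euc n → ℝ)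
    (a k : ℝ) (b c d : Euc n → ℝ) : Prop :=
  0 < a ∧ 0 ≤ k ∧
  (∀ x, 0 ≤ b x) ∧ (∀ x, 0 ≤ c x) ∧ (∀ x, 0 ≤ d x) ∧
  Measurable b ∧ Measurable c ∧ Measurable d ∧
  MemLlogL n r D (fun x => b x ^ ((n:ℝ)/((n:ℝ)-1))) ∧
  MemLlogL n r D (fun x => c x ^ (n:ℝ)) ∧
  MemLlogL n r D d ∧
  ∀ x ∈ D, ∀ (U : ℝ) (p : Euc n),
    ‖AA x U p‖ ≤ a * ‖p‖ ^ ((n:ℝ)-1) + b x * (|U| + k) ^ ((n:ℝ)-1) ∧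
    |BB x U p| ≤ c x * ‖p‖ ^ ((n:ℝ)-1) + d x * (|U| + k) ^ ((n:ℝ)-1) ∧
    ‖p‖ ^ (n:ℝ) - d x * (|U| + k) ^ (n:ℝ) ≤ ⟪p, AA x U p⟫

/-- `k = (‖e^{n/(n-1)}‖^{(n-1)/n} + ‖f‖)^{1/(n-1)} + ‖g‖^{1/n}`, norms over `D`. -/
def kval (n : ℕ) (r : ℝ) (D : Set (Euc n)) (e f g : Euc n → ℝ) : ℝ :=
  ((luxNorm n r D (fun x => e x ^ ((n:ℝ)/((n:ℝ)-1)))) ^ (((n:ℝ)-1)/(n:ℝ))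
      + luxNorm n r D f) ^ (1/((n:ℝ)-1))
    + (luxNorm n r D g) ^ (1/(n:ℝ))

/-!
Let `p = n / (n - 1)` and `0 ≤ a < b`. The Gagliardo–Nirenberg–Sobolev inequality, applied to a
smooth cutoff of `u` to the layer `a < ‖u‖ < b`, and Hölder's inequality give
`|{‖u‖ > b}| ≤ K (b - a) ^ (-p) (∫_{a < ‖u‖ < b} |∇u| ^ n) ^ (p / n) |{‖u‖ > a}|`.
Iterate this over `k` equal layers. The layer energies add up to at most `‖∇u‖_n ^ n`, so AM–GM
bounds their product, and choosing `k` proportional to the `p`-th power of the height gives an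
exponential tail: `∫_Ω exp (κ (‖u‖ / ‖∇u‖_n) ^ p) ≤ A |Ω|`.

With `w = κ (‖u‖ / ‖∇u‖_n) ^ p` and `L = log (1 + |Ω| ^ (-1 / (1 - r)))`, the claim reduces to
`exp (L ^ (1 - r) w ^ r) - 1 ≤ 3 |Ω|⁻¹ exp w`. For `|Ω| ≤ 1` this follows from the weighted AM–GM
inequality `L ^ (1 - r) w ^ r ≤ (1 - r) L + r w`; for `|Ω| ≥ 1` the exponent is at most
`|Ω|⁻¹ w ^ r`, and convexity of `exp` pulls the factor `|Ω|⁻¹ ≤ 1` out of the exponential.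
-/

open Module Set
open scoped NNReal

section Cutoff

lemma deriv_smoothTransition_of_notMem_Ioo {t : ℝ} (ht : t ∉ Ioo 0 1) :
    deriv Real.smoothTransition t = 0 := by
  rcases le_or_gt t 0 with h0 | h0
  · refine IsLocalMin.deriv_eq_zero (Eventually.of_forall fun s => ?_)
    rw [Real.smoothTransition.zero_of_nonpos h0]
    exact Real.smoothTransition.nonneg s
  · have h1 : 1 ≤ t := not_lt.1 fun h1 => ht ⟨h0, h1⟩
    refine IsLocalMax.deriv_eq_zero (Eventually.of_forall fun s => ?_)
    rw [Real.smoothTransition.one_of_one_le h1]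
    exact Real.smoothTransition.le_one s

lemma exists_abs_deriv_smoothTransition_le :
    ∃ K : ℝ, ∀ t, |deriv Real.smoothTransition t| ≤ K := by
  have hcont : Continuous (deriv Real.smoothTransition) :=
    (Real.smoothTransition.contDiff (n := 1)).continuous_deriv le_rfl
  have hsupp : HasCompactSupport (deriv Real.smoothTransition) :=
    HasCompactSupport.intro isCompact_Icc fun t ht =>
      deriv_smoothTransition_of_notMem_Ioo fun h => ht (Ioo_subset_Icc_self h)
  exact hcont.bounded_above_of_compact_support hsupp

/-- The cutoff of `u` to the layer `a < ‖u‖ < b`: it vanishes where `‖u‖ ≤ a` and equals `1` where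
`b ≤ ‖u‖`. It is built from `‖u‖²` rather than `‖u‖` so as to be as smooth as `u`, also at the
zeros of `u`. -/
def layerCutoff {α F : Type*} [Norm F] (a b : ℝ) (u : α → F) (x : α) : ℝ :=
  Real.smoothTransition ((‖u x‖ ^ 2 - a ^ 2) / (b ^ 2 - a ^ 2))

section Values

variable {α F : Type*} [SeminormedAddGroup F] {a b : ℝ} {u : α → F} {x : α}

lemma layerCutoff_eq_zero (ha : 0 ≤ a) (hab : a < b) (hx : ‖u x‖ ≤ a) :
    layerCutoff a b u x = 0 :=
  Real.smoothTransition.zero_of_nonpos <| div_nonpos_of_nonpos_of_nonneg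
    (by nlinarith [norm_nonneg (u x)]) (by nlinarith)

lemma layerCutoff_eq_one (ha : 0 ≤ a) (hab : a < b) (hx : b ≤ ‖u x‖) :
    layerCutoff a b u x = 1 :=
  Real.smoothTransition.one_of_one_le <| (one_le_div (by nlinarith)).2 (by nlinarith)

lemma hasCompactSupport_layerCutoff {α F : Type*} [TopologicalSpace α] [NormedAddGroup F]
    {u : α → F} (hu : HasCompactSupport u) (ha : 0 ≤ a) (hab : a < b) :
    HasCompactSupport (layerCutoff a b u) :=
  hu.mono fun x hx hux => hx (layerCutoff_eq_zero ha hab (by simpa [hux] using ha))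

end Values

section Derivative

variable {E F : Type*} [NormedAddCommGroup E] [NormedSpace ℝ E]
  [NormedAddCommGroup F] [InnerProductSpace ℝ F] {a b : ℝ} {u : E → F} {x : E}

lemma contDiff_layerCutoff (hu : ContDiff ℝ 1 u) : ContDiff ℝ 1 (layerCutoff a b u) :=
  (Real.smoothTransition.contDiff (n := 1)).comp
    (((hu.norm_sq ℝ).sub contDiff_const).div_const _)

lemma fderiv_layerCutoff (hu : DifferentiableAt ℝ u x) :
    fderiv ℝ (layerCutoff a b u) x =
      (deriv Real.smoothTransition ((‖u x‖ ^ 2 - a ^ 2) / (b ^ 2 - a ^ 2)) *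
        (2 / (b ^ 2 - a ^ 2))) • (innerSL ℝ (u x)).comp (fderiv ℝ u x) := by
  have hinner := (hu.hasFDerivAt.norm_sq.sub_const (a ^ 2)).mul_const (b ^ 2 - a ^ 2)⁻¹
  have houter := ((Real.smoothTransition.contDiff (n := 1)).differentiable one_ne_zero
    ((‖u x‖ ^ 2 - a ^ 2) / (b ^ 2 - a ^ 2))).hasDerivAt
  refine (houter.comp_hasFDerivAt x hinner).fderiv.trans ?_
  module

lemma norm_fderiv_layerCutoff_le {K : ℝ} (hK : ∀ t, |deriv Real.smoothTransition t| ≤ K)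
    (ha : 0 ≤ a) (hab : a < b) (hu : DifferentiableAt ℝ u x) (hx : ‖u x‖ ≤ b) :
    ‖fderiv ℝ (layerCutoff a b u) x‖ ≤ 2 * K / (b - a) * ‖fderiv ℝ u x‖ := by
  have hba : 0 < b - a := sub_pos.2 hab
  have hsum : 0 < b + a := by linarith
  have hsq : b ^ 2 - a ^ 2 = (b - a) * (b + a) := by ring
  have hcomp : ‖(innerSL ℝ (u x)).comp (fderiv ℝ u x)‖ ≤ (b + a) * ‖fderiv ℝ u x‖ :=
    (ContinuousLinearMap.opNorm_comp_le _ _).trans <| by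
      rw [innerSL_apply_norm]; gcongr; linarith
  rw [fderiv_layerCutoff hu, norm_smul, norm_mul, hsq,
    Real.norm_of_nonneg (r := 2 / ((b - a) * (b + a))) (by positivity)]
  have hK0 : 0 ≤ K := (abs_nonneg _).trans (hK 0)
  calc _ ≤ K * (2 / ((b - a) * (b + a))) * ((b + a) * ‖fderiv ℝ u x‖) := by
        gcongr
        exact hK _
    _ = 2 * K / (b - a) * ‖fderiv ℝ u x‖ := by field_simp

lemma fderiv_layerCutoff_eq_zero (ha : 0 ≤ a) (hab : a < b) (hu : DifferentiableAt ℝ u x)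
    (hx : ‖u x‖ ∉ Ioo a b) : fderiv ℝ (layerCutoff a b u) x = 0 := by
  rw [fderiv_layerCutoff hu, deriv_smoothTransition_of_notMem_Ioo, zero_mul, zero_smul]
  have hsq : 0 < b ^ 2 - a ^ 2 := by nlinarith
  rintro ⟨h0, h1⟩
  rw [lt_div_iff₀ hsq] at h0
  rw [div_lt_one hsq] at h1
  exact hx ⟨lt_of_pow_lt_pow_left₀ 2 (norm_nonneg _) (by linarith),
    lt_of_pow_lt_pow_left₀ 2 (by linarith) (by linarith)⟩

lemma lintegral_enorm_fderiv_layerCutoff_le [MeasurableSpace E] [OpensMeasurableSpace E]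
    (μ : Measure E) {K : ℝ} (hK : ∀ t, |deriv Real.smoothTransition t| ≤ K)
    (ha : 0 ≤ a) (hab : a < b) (hu : ContDiff ℝ 1 u) :
    ∫⁻ x, ‖fderiv ℝ (layerCutoff a b u) x‖ₑ ∂μ ≤
      ENNReal.ofReal (2 * K / (b - a)) * ∫⁻ x in {x | ‖u x‖ ∈ Ioo a b}, ‖fderiv ℝ u x‖ₑ ∂μ := by
  have hmeas : MeasurableSet {x | ‖u x‖ ∈ Ioo a b} :=
    (isOpen_Ioo.preimage hu.continuous.norm).measurableSet
  rw [← lintegral_const_mul' _ _ ENNReal.ofReal_ne_top, ← lintegral_indicator hmeas]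
  refine lintegral_mono fun x => ?_
  have hux := hu.differentiable one_ne_zero x
  by_cases hx : ‖u x‖ ∈ Ioo a b
  · rw [indicator_of_mem (by exact hx), ← ofReal_norm, ← ofReal_norm (fderiv ℝ u x),
      ← ENNReal.ofReal_mul' (norm_nonneg _)]
    exact ENNReal.ofReal_le_ofReal (norm_fderiv_layerCutoff_le hK ha hab hux hx.2.le)
  · rw [fderiv_layerCutoff_eq_zero ha hab hux hx, ← ofReal_norm, norm_zero, ENNReal.ofReal_zero]
    exact zero_le

end Derivative

end Cutoff

section LevelSets

lemma prod_le_sum_div_card_pow {ι : Type*} (s : Finset ι) (g : ι → ℝ≥0∞) :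
    ∏ i ∈ s, g i ≤ ((∑ i ∈ s, g i) / s.card) ^ s.card := by
  rcases s.eq_empty_or_nonempty with rfl | hs
  · simp
  by_cases htop : ∃ i ∈ s, g i = ⊤
  · rw [ENNReal.sum_eq_top.2 htop, ENNReal.top_div_of_ne_top (ENNReal.natCast_ne_top _),
      ENNReal.top_pow hs.card_ne_zero]
    exact le_top
  push Not at htop
  have hcard : (s.card : ℝ≥0) ≠ 0 := Nat.cast_ne_zero.2 hs.card_ne_zero
  have hlift : ∀ i ∈ s, g i = (g i).toNNReal := fun i hi => (ENNReal.coe_toNNReal (htop i hi)).symm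
  have hmean := NNReal.geom_mean_le_arith_mean_weighted s (fun _ => (s.card : ℝ≥0)⁻¹)
    (fun i => (g i).toNNReal) (by rw [Finset.sum_const, nsmul_eq_mul, mul_inv_cancel₀ hcard])
  rw [← Finset.mul_sum, NNReal.finsetProd_rpow, inv_mul_eq_div, NNReal.coe_inv,
    NNReal.rpow_inv_le_iff (by positivity), NNReal.coe_natCast, NNReal.rpow_natCast] at hmean
  rw [Finset.prod_congr rfl hlift, Finset.sum_congr rfl hlift, ← ENNReal.ofNNReal_finsetProd,
    ← ENNReal.ofNNReal_finsetSum, ← ENNReal.coe_natCast, ← ENNReal.coe_div hcard]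
  exact_mod_cast hmean

lemma setLIntegral_le_rpow_mul_measure_rpow {α : Type*} [MeasurableSpace α] (μ : Measure α)
    {p q : ℝ} (hpq : p.HolderConjugate q) (s : Set α) {f : α → ℝ≥0∞} (hf : Measurable f) :
    ∫⁻ x in s, f x ∂μ ≤ (∫⁻ x in s, f x ^ p ∂μ) ^ (1 / p) * μ s ^ (1 / q) := by
  simpa using ENNReal.lintegral_mul_le_Lp_mul_Lq (μ.restrict s) hpq hf.aemeasurable
    (aemeasurable_const (b := 1))

lemma le_mean_rpow_pow_mul_of_succ_le {M g : ℕ → ℝ≥0∞} {c : ℝ≥0∞} {t : ℝ} (ht : 0 ≤ t)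
    (hM : ∀ j, M (j + 1) ≤ c * g j ^ t * M j) (k : ℕ) :
    M k ≤ (c * ((∑ j ∈ Finset.range k, g j) / k) ^ t) ^ k * M 0 := by
  have hprod : M k ≤ c ^ k * (∏ j ∈ Finset.range k, g j) ^ t * M 0 := by
    induction k with
    | zero => simp
    | succ k ih =>
      calc M (k + 1) ≤ c * g k ^ t * (c ^ k * (∏ j ∈ Finset.range k, g j) ^ t * M 0) :=
            (hM k).trans (by gcongr)
        _ = _ := by
            rw [Finset.prod_range_succ, ENNReal.mul_rpow_of_nonneg _ _ ht]
            ring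
  refine hprod.trans ?_
  rw [mul_pow, ← ENNReal.rpow_natCast (_ ^ t), ← ENNReal.rpow_mul, mul_comm t, ENNReal.rpow_mul,
    ENNReal.rpow_natCast]
  gcongr
  simpa using prod_le_sum_div_card_pow (Finset.range k) g

lemma sum_setLIntegral_Ioo_preimage_le {α : Type*} [MeasurableSpace α] (μ : Measure α)
    {v : α → ℝ} (hv : Measurable v) {h : ℝ} (hh : 0 ≤ h) (f : α → ℝ≥0∞) (k : ℕ) :
    ∑ j ∈ Finset.range k, ∫⁻ x in v ⁻¹' Ioo (j * h) ((j + 1 : ℕ) * h), f x ∂μ ≤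
      ∫⁻ x, f x ∂μ := by
  have hmono : Monotone fun j : ℕ => j * h := fun i j hij => by dsimp only; gcongr
  have hdisj : Pairwise (Function.onFun Disjoint
      fun j : ℕ => v ⁻¹' Ioo (j * h) ((j + 1 : ℕ) * h)) :=
    fun i j hij => (hmono.pairwise_disjoint_on_Ioo_succ hij).preimage v
  rw [← lintegral_biUnion_finset (hdisj.set_pairwise _) fun j _ => hv measurableSet_Ioo]
  exact setLIntegral_le_lintegral _ _

lemma measure_lt_norm_le_lintegral_layerCutoff {α F : Type*} [TopologicalSpace α]
    [MeasurableSpace α] [OpensMeasurableSpace α] (μ : Measure α) [SeminormedAddGroup F]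
    {a b : ℝ} {u : α → F} (hu : Continuous u) (ha : 0 ≤ a) (hab : a < b) (p : ℝ) :
    μ {x | b < ‖u x‖} ≤ ∫⁻ x, ‖layerCutoff a b u x‖ₑ ^ p ∂μ := by
  have hmeas : MeasurableSet {x | b < ‖u x‖} := (isOpen_lt continuous_const hu.norm).measurableSet
  rw [← lintegral_indicator_one hmeas]
  refine lintegral_mono (indicator_le fun x (hx : b < ‖u x‖) => ?_)
  simp [layerCutoff_eq_one ha hab hx.le]

variable {E F : Type*} [NormedAddCommGroup E] [NormedSpace ℝ E] [FiniteDimensional ℝ E]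
  [MeasurableSpace E] [BorelSpace E] (μ : Measure E) [μ.IsAddHaarMeasure]
  [NormedAddCommGroup F] [InnerProductSpace ℝ F] {p : ℝ}

lemma exists_measure_lt_norm_le (hp : (finrank ℝ E : ℝ).HolderConjugate p) :
    ∃ K : ℝ, 0 < K ∧ ∀ u : E → F, ContDiff ℝ 1 u → HasCompactSupport u →
      ∀ a b : ℝ, 0 ≤ a → a < b →
        μ {x | b < ‖u x‖} ≤ ENNReal.ofReal (K * (b - a) ^ (-p)) *
          (∫⁻ x in {x | ‖u x‖ ∈ Ioo a b}, ‖fderiv ℝ u x‖ₑ ^ (finrank ℝ E : ℝ) ∂μ) ^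
            (p / finrank ℝ E) * μ {x | a < ‖u x‖} := by
  obtain ⟨K, hK⟩ := exists_abs_deriv_smoothTransition_le
  have hK0 : 0 ≤ K := (abs_nonneg _).trans (hK 0)
  have hp0 : 0 ≤ p := hp.symm.nonneg
  set c := lintegralPowLePowLIntegralFDerivConst μ p
  refine ⟨c * (2 * K) ^ p + 1, by positivity, fun u hu hsupp a b ha hab => ?_⟩
  have hba : 0 < b - a := sub_pos.2 hab
  set A := {x | ‖u x‖ ∈ Ioo a b}
  set J := ∫⁻ x in A, ‖fderiv ℝ u x‖ₑ ^ (finrank ℝ E : ℝ) ∂μ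
  have hconst : (c : ℝ≥0∞) * ENNReal.ofReal (2 * K / (b - a)) ^ p ≤
      ENNReal.ofReal ((c * (2 * K) ^ p + 1) * (b - a) ^ (-p)) := by
    rw [ENNReal.ofReal_rpow_of_nonneg (by positivity) hp0, ← ENNReal.ofReal_coe_nnreal,
      ← ENNReal.ofReal_mul c.coe_nonneg, Real.div_rpow (by positivity) hba.le, Real.rpow_neg hba.le,
      div_eq_mul_inv, ← mul_assoc]
    gcongr
    linarith
  calc μ {x | b < ‖u x‖}
      ≤ ∫⁻ x, ‖layerCutoff a b u x‖ₑ ^ p ∂μ :=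
        measure_lt_norm_le_lintegral_layerCutoff μ hu.continuous ha hab p
    _ ≤ c * (∫⁻ x, ‖fderiv ℝ (layerCutoff a b u) x‖ₑ ∂μ) ^ p :=
        lintegral_pow_le_pow_lintegral_fderiv μ (contDiff_layerCutoff hu)
          (hasCompactSupport_layerCutoff hsupp ha hab) hp
    _ ≤ c * (ENNReal.ofReal (2 * K / (b - a)) *
          (J ^ (1 / (finrank ℝ E : ℝ)) * μ A ^ (1 / p))) ^ p := by
        gcongr
        refine (lintegral_enorm_fderiv_layerCutoff_le μ hK ha hab hu).trans ?_
        gcongr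
        exact setLIntegral_le_rpow_mul_measure_rpow μ hp A
          (hu.continuous_fderiv one_ne_zero).enorm.measurable
    _ = c * ENNReal.ofReal (2 * K / (b - a)) ^ p * J ^ (p / finrank ℝ E) * μ A := by
        rw [ENNReal.mul_rpow_of_nonneg _ _ hp0, ENNReal.mul_rpow_of_nonneg _ _ hp0,
          ← ENNReal.rpow_mul, ← ENNReal.rpow_mul, one_div_mul_cancel hp.symm.ne_zero,
          ENNReal.rpow_one, one_div_mul_eq_div]
        ring
    _ ≤ _ := by
        gcongr
        exact fun x hx => hx.1

lemma exists_measure_natCast_mul_lt_norm_le (hp : (finrank ℝ E : ℝ).HolderConjugate p) :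
    ∃ K : ℝ, 0 < K ∧ ∀ u : E → F, ContDiff ℝ 1 u → HasCompactSupport u →
      ∀ h : ℝ, 0 < h → ∀ k : ℕ,
        μ {x | k * h < ‖u x‖} ≤ (ENNReal.ofReal (K * h ^ (-p)) *
          ((∫⁻ x, ‖fderiv ℝ u x‖ₑ ^ (finrank ℝ E : ℝ) ∂μ) / k) ^ (p / finrank ℝ E)) ^ k *
            μ (Function.support u) := by
  obtain ⟨K, hK, hlayer⟩ := exists_measure_lt_norm_le (F := F) μ hp
  have ht : 0 ≤ p / finrank ℝ E := div_nonneg hp.symm.nonneg (Nat.cast_nonneg _)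
  refine ⟨K, hK, fun u hu hsupp h hh k => ?_⟩
  have hstep (j : ℕ) : μ {x | (j + 1 : ℕ) * h < ‖u x‖} ≤ ENNReal.ofReal (K * h ^ (-p)) *
      (∫⁻ x in {x | ‖u x‖ ∈ Ioo (j * h) ((j + 1 : ℕ) * h)},
        ‖fderiv ℝ u x‖ₑ ^ (finrank ℝ E : ℝ) ∂μ) ^ (p / finrank ℝ E) * μ {x | j * h < ‖u x‖} := by
    have hwidth : (j + 1 : ℕ) * h - j * h = h := by push_cast; ring
    have := hlayer u hu hsupp (j * h) ((j + 1 : ℕ) * h) (by positivity) (by linarith)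
    rwa [hwidth] at this
  have hzero : μ {x | (0 : ℕ) * h < ‖u x‖} = μ (Function.support u) := by
    simp [Function.support]
  refine (le_mean_rpow_pow_mul_of_succ_le ht hstep k).trans ?_
  rw [hzero]
  gcongr
  exact sum_setLIntegral_Ioo_preimage_le μ hu.continuous.norm.measurable hh.le _ k

end LevelSets

section ExponentialIntegrability

lemma ofReal_exp_le_one_add_tsum (t : ℝ) :
    ENNReal.ofReal (Real.exp t) ≤
      1 + ∑' k : ℕ, (Ioi (k : ℝ)).indicator (fun _ => ENNReal.ofReal (Real.exp 1) ^ (k + 1)) t := by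
  rcases le_or_gt t 0 with ht | ht
  · exact (ENNReal.ofReal_le_one.2 (Real.exp_le_one_iff.2 ht)).trans le_self_add
  obtain ⟨k, hk⟩ : ∃ k, ⌈t⌉₊ = k + 1 := Nat.exists_eq_succ_of_ne_zero (Nat.ceil_pos.2 ht).ne'
  have hkt : t ∈ Ioi (k : ℝ) := Nat.lt_ceil.1 (k.lt_succ_self.trans_eq hk.symm)
  have htk : t ≤ (k + 1 : ℕ) * 1 := by simpa [hk] using Nat.le_ceil t
  refine le_trans ?_ (le_add_left (ENNReal.le_tsum k))
  rw [indicator_of_mem hkt, ← ENNReal.ofReal_pow (Real.exp_pos 1).le, ← Real.exp_nat_mul]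
  gcongr

lemma lintegral_ofReal_exp_le_of_measure_lt_le {α : Type*} [MeasurableSpace α] {μ : Measure α}
    {w : α → ℝ} (hw : Measurable w) {ρ V : ℝ≥0∞} (hV : ∀ k : ℕ, μ {x | k < w x} ≤ ρ ^ k * V) :
    ∫⁻ x, ENNReal.ofReal (Real.exp (w x)) ∂μ ≤
      μ univ + ENNReal.ofReal (Real.exp 1) * (1 - ENNReal.ofReal (Real.exp 1) * ρ)⁻¹ * V := by
  set e := ENNReal.ofReal (Real.exp 1)
  have hmeas (k : ℕ) : Measurable fun x => (Ioi (k : ℝ)).indicator (fun _ => e ^ (k + 1)) (w x) :=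
    (measurable_const.indicator measurableSet_Ioi).comp hw
  have hterm (k : ℕ) : ∫⁻ x, (Ioi (k : ℝ)).indicator (fun _ => e ^ (k + 1)) (w x) ∂μ ≤
      e * (e * ρ) ^ k * V := by
    calc ∫⁻ x, (Ioi (k : ℝ)).indicator (fun _ => e ^ (k + 1)) (w x) ∂μ
        = e ^ (k + 1) * μ {x | k < w x} := lintegral_indicator_const (hw measurableSet_Ioi) _
      _ ≤ e ^ (k + 1) * (ρ ^ k * V) := by gcongr; exact hV k
      _ = e * (e * ρ) ^ k * V := by ring
  calc ∫⁻ x, ENNReal.ofReal (Real.exp (w x)) ∂μ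
      ≤ ∫⁻ x, (1 + ∑' k : ℕ, (Ioi (k : ℝ)).indicator (fun _ => e ^ (k + 1)) (w x)) ∂μ :=
        lintegral_mono fun x => ofReal_exp_le_one_add_tsum (w x)
    _ = μ univ + ∑' k : ℕ, ∫⁻ x, (Ioi (k : ℝ)).indicator (fun _ => e ^ (k + 1)) (w x) ∂μ := by
        rw [lintegral_add_left measurable_const, lintegral_one,
          lintegral_tsum fun k => (hmeas k).aemeasurable]
    _ ≤ μ univ + ∑' k : ℕ, e * (e * ρ) ^ k * V := by gcongr with k; exact hterm k
    _ = μ univ + e * (1 - e * ρ)⁻¹ * V := by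
        rw [ENNReal.tsum_mul_right, ENNReal.tsum_mul_left, ENNReal.tsum_geometric]

lemma rpow_neg_mul_div_rpow_eq {n p G κ k : ℝ} (hnp : n.HolderConjugate p) (hG : 0 < G)
    (hκ : 0 < κ) (hk : 0 < k) :
    (G * (k / κ) ^ (1 / p) / k) ^ (-p) * (G ^ n / k) ^ (p / n) = κ := by
  have hp0 : p ≠ 0 := hnp.symm.ne_zero
  have hn0 : n ≠ 0 := hnp.ne_zero
  have hpn : k ^ p = k * k ^ (p / n) := by
    rw [hnp.symm.div_conj_eq_sub_one, ← Real.rpow_one_add' hk.le (by simpa using hp0),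
      add_sub_cancel]
  rw [Real.rpow_neg (by positivity), Real.div_rpow (by positivity) hk.le,
    Real.mul_rpow hG.le (by positivity), ← Real.rpow_mul (by positivity), one_div_mul_cancel hp0,
    Real.rpow_one, Real.div_rpow (by positivity) hk.le, ← Real.rpow_mul hG.le,
    mul_div_cancel₀ _ hn0, hpn]
  field_simp

lemma lintegral_enorm_rpow_le_of_eLpNorm_le {α F : Type*} [MeasurableSpace α] [ENorm F]
    {μ : Measure α} {f : α → F} {n : ℕ} (hn : n ≠ 0) {G : ℝ} (hG : 0 ≤ G)
    (hf : eLpNorm f n μ ≤ ENNReal.ofReal G) :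
    ∫⁻ x, ‖f x‖ₑ ^ (n : ℝ) ∂μ ≤ ENNReal.ofReal (G ^ (n : ℝ)) := by
  have hn0 : (0 : ℝ) < n := Nat.cast_pos.2 hn.bot_lt
  rwa [eLpNorm_eq_lintegral_rpow_enorm_toReal (Nat.cast_ne_zero.2 hn) (ENNReal.natCast_ne_top _),
    ENNReal.toReal_natCast, one_div, ENNReal.rpow_inv_le_iff hn0,
    ENNReal.ofReal_rpow_of_nonneg hG hn0.le] at hf

variable {E F : Type*} [NormedAddCommGroup E] [NormedSpace ℝ E] [FiniteDimensional ℝ E]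
  [MeasurableSpace E] [BorelSpace E] (μ : Measure E) [μ.IsAddHaarMeasure]
  [NormedAddCommGroup F] [InnerProductSpace ℝ F] {p : ℝ}

lemma exists_measure_lt_rpow_norm_le (hp : (finrank ℝ E : ℝ).HolderConjugate p) :
    ∃ κ : ℝ, 0 < κ ∧ ∀ u : E → F, ContDiff ℝ 1 u → HasCompactSupport u →
      ∀ G : ℝ, 0 < G → eLpNorm (fderiv ℝ u) (finrank ℝ E) μ ≤ ENNReal.ofReal G →
        ∀ k : ℕ, μ {x | k < κ * (‖u x‖ / G) ^ p} ≤
          ENNReal.ofReal (Real.exp (-2)) ^ k * μ (Function.support u) := by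
  obtain ⟨K, hK, hlevel⟩ := exists_measure_natCast_mul_lt_norm_le (F := F) μ hp
  have hp0 : 0 < p := hp.symm.pos
  have hn0 : 0 < (finrank ℝ E : ℝ) := hp.pos
  set n : ℝ := (finrank ℝ E : ℝ)
  refine ⟨Real.exp (-2) / K, by positivity, fun u hu hsupp G hG hDu k => ?_⟩
  set κ := Real.exp (-2) / K with hκ_def
  have hκ : 0 < κ := by positivity
  rcases k.eq_zero_or_pos with rfl | hk
  · rw [pow_zero, one_mul]
    refine measure_mono fun x hx hux => ?_
    simp [hux, hp0.ne'] at hx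
  have hk : (0 : ℝ) < k := Nat.cast_pos.2 hk
  have henergy : ∫⁻ x, ‖fderiv ℝ u x‖ₑ ^ n ∂μ ≤ ENNReal.ofReal (G ^ n) :=
    lintegral_enorm_rpow_le_of_eLpNorm_le (Nat.cast_ne_zero.1 hp.ne_zero) hG.le hDu
  -- This `h` makes `k * h < ‖u x‖` and `k < κ * (‖u x‖ / G) ^ p` the same condition.
  set h := G * (k / κ) ^ (1 / p) / k with hh
  have hsub : {x | k < κ * (‖u x‖ / G) ^ p} ⊆ {x | k * h < ‖u x‖} := by
    intro x hx
    have : k / κ < (‖u x‖ / G) ^ p := (div_lt_iff₀' hκ).2 hx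
    rw [← Real.rpow_inv_lt_iff_of_pos (by positivity) (by positivity) hp0, lt_div_iff₀' hG] at this
    simpa only [hh, mul_div_cancel₀ _ hk.ne', one_div, mem_ofPred_eq] using this
  have hratio : ENNReal.ofReal (K * h ^ (-p)) *
      ((∫⁻ x, ‖fderiv ℝ u x‖ₑ ^ n ∂μ) / k) ^ (p / n) ≤ ENNReal.ofReal (Real.exp (-2)) := by
    calc _ ≤ ENNReal.ofReal (K * h ^ (-p)) * (ENNReal.ofReal (G ^ n) / k) ^ (p / n) := by gcongr
      _ = ENNReal.ofReal (K * (h ^ (-p) * (G ^ n / k) ^ (p / n))) := by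
        rw [← ENNReal.ofReal_natCast, ← ENNReal.ofReal_div_of_pos hk,
          ENNReal.ofReal_rpow_of_pos (by positivity), ← ENNReal.ofReal_mul (by positivity),
          mul_assoc]
      _ = ENNReal.ofReal (Real.exp (-2)) := by
        rw [rpow_neg_mul_div_rpow_eq hp hG hκ hk, hκ_def, mul_div_cancel₀ _ hK.ne']
  exact (measure_mono hsub).trans <| (hlevel u hu hsupp h (by positivity) k).trans (by gcongr)

lemma exists_lintegral_exp_rpow_norm_le (hp : (finrank ℝ E : ℝ).HolderConjugate p) :
    ∃ κ : ℝ, 0 < κ ∧ ∃ A : ℝ≥0, ∀ (Ω : Set E) (u : E → F), ContDiff ℝ 1 u → HasCompactSupport u →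
      Function.support u ⊆ Ω →
      ∀ G : ℝ, 0 < G → eLpNorm (fderiv ℝ u) (finrank ℝ E) μ ≤ ENNReal.ofReal G →
        ∫⁻ x in Ω, ENNReal.ofReal (Real.exp (κ * (‖u x‖ / G) ^ p)) ∂μ ≤ A * μ Ω := by
  obtain ⟨κ, hκ, htail⟩ := exists_measure_lt_rpow_norm_le (F := F) μ hp
  set e := ENNReal.ofReal (Real.exp 1)
  set ρ := ENNReal.ofReal (Real.exp (-2))
  have hgeom : e * ρ < 1 := by
    rw [← ENNReal.ofReal_mul (Real.exp_pos 1).le, ← Real.exp_add, ENNReal.ofReal_lt_one,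
      Real.exp_lt_one_iff]
    norm_num
  have hfin : 1 + e * (1 - e * ρ)⁻¹ ≠ ⊤ := by
    finiteness [(tsub_pos_of_lt hgeom).ne']
  refine ⟨κ, hκ, (1 + e * (1 - e * ρ)⁻¹).toNNReal, fun Ω u hu hsupp hΩ G hG hDu => ?_⟩
  have hmeas : Measurable fun x => κ * (‖u x‖ / G) ^ p :=
    (((hu.continuous.norm.div_const G).rpow_const fun _ => Or.inr hp.symm.nonneg).const_mul
      κ).measurable
  have hrestrict (k : ℕ) : μ.restrict Ω {x | k < κ * (‖u x‖ / G) ^ p} ≤ ρ ^ k * μ Ω :=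
    (Measure.restrict_apply_le _ _).trans <| (htail u hu hsupp G hG hDu k).trans (by gcongr)
  refine (lintegral_ofReal_exp_le_of_measure_lt_le hmeas hrestrict).trans_eq ?_
  rw [Measure.restrict_apply_univ, ENNReal.coe_toNNReal hfin, add_mul, one_mul]

end ExponentialIntegrability

section Modular

lemma exp_mul_sub_one_le {ε : ℝ} (h0 : 0 ≤ ε) (h1 : ε ≤ 1) (x : ℝ) :
    Real.exp (ε * x) - 1 ≤ ε * (Real.exp x - 1) := by
  have := convexOn_exp.2 (mem_univ x) (mem_univ 0) h0 (sub_nonneg.2 h1) (add_sub_cancel _ _)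
  simp only [smul_eq_mul, mul_zero, add_zero, Real.exp_zero, mul_one] at this
  linarith

lemma exp_log_rpow_mul_rpow_le_of_one_le {r y w : ℝ} (hr0 : 0 ≤ r) (hr1 : r ≤ 1) (hy : 1 ≤ y)
    (hw : 0 ≤ w) :
    Real.exp (Real.log (1 + y) ^ (1 - r) * w ^ r) ≤ 2 * y ^ (1 - r) * Real.exp w := by
  have h1r : 0 ≤ 1 - r := sub_nonneg.2 hr1
  have hamgm : Real.log (1 + y) ^ (1 - r) * w ^ r ≤ (1 - r) * Real.log (1 + y) + r * w :=
    Real.geom_mean_le_arith_mean2_weighted h1r hr0 (Real.log_nonneg (by linarith)) hw (by ring)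
  have hlog : Real.exp ((1 - r) * Real.log (1 + y)) = (1 + y) ^ (1 - r) := by
    rw [Real.rpow_def_of_pos (by linarith), mul_comm]
  have hpow : (1 + y) ^ (1 - r) ≤ 2 * y ^ (1 - r) := by
    calc (1 + y) ^ (1 - r) ≤ (2 * y) ^ (1 - r) := by gcongr; linarith
      _ = 2 ^ (1 - r) * y ^ (1 - r) := Real.mul_rpow zero_le_two (by linarith)
      _ ≤ 2 * y ^ (1 - r) := by
        gcongr
        exact Real.rpow_le_self_of_one_le one_le_two (by linarith)
  calc Real.exp (Real.log (1 + y) ^ (1 - r) * w ^ r)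
      ≤ Real.exp ((1 - r) * Real.log (1 + y) + r * w) := Real.exp_le_exp.2 hamgm
    _ = (1 + y) ^ (1 - r) * Real.exp (r * w) := by rw [Real.exp_add, hlog]
    _ ≤ 2 * y ^ (1 - r) * Real.exp w := by
        gcongr
        exact mul_le_of_le_one_left hw hr1

lemma exp_log_rpow_mul_rpow_sub_one_le_of_le_one {r y w : ℝ} (hr0 : 0 ≤ r) (hr1 : r ≤ 1)
    (hy0 : 0 ≤ y) (hy1 : y ≤ 1) (hw : 0 ≤ w) :
    Real.exp (Real.log (1 + y) ^ (1 - r) * w ^ r) - 1 ≤ 3 * y ^ (1 - r) * Real.exp w := by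
  have h1r : 0 ≤ 1 - r := sub_nonneg.2 hr1
  have hlog : Real.log (1 + y) ≤ y := by
    linarith [Real.log_le_sub_one_of_pos (show 0 < 1 + y by linarith)]
  have hlog0 : 0 ≤ Real.log (1 + y) := Real.log_nonneg (by linarith)
  have hwr : w ^ r ≤ 1 + w := by
    have := Real.geom_mean_le_arith_mean2_weighted h1r hr0 zero_le_one hw (by ring)
    simp only [Real.one_rpow, one_mul, mul_one] at this
    nlinarith
  have hexp : Real.exp (w ^ r) ≤ 3 * Real.exp w := by
    calc Real.exp (w ^ r) ≤ Real.exp 1 * Real.exp w := by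
          rw [← Real.exp_add]
          gcongr
      _ ≤ 3 * Real.exp w := by
          gcongr
          exact Real.exp_one_lt_three.le
  calc Real.exp (Real.log (1 + y) ^ (1 - r) * w ^ r) - 1
      ≤ Real.exp (y ^ (1 - r) * w ^ r) - 1 := by gcongr
    _ ≤ y ^ (1 - r) * (Real.exp (w ^ r) - 1) :=
        exp_mul_sub_one_le (by positivity) (Real.rpow_le_one hy0 hy1 h1r) _
    _ ≤ y ^ (1 - r) * (3 * Real.exp w) := by gcongr; linarith
    _ = 3 * y ^ (1 - r) * Real.exp w := by ring

lemma exp_log_rpow_mul_rpow_sub_one_le {r V w : ℝ} (hr0 : 0 ≤ r) (hr1 : r < 1) (hV : 0 < V)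
    (hw : 0 ≤ w) :
    Real.exp (Real.log (1 + V ^ (-(1 / (1 - r)))) ^ (1 - r) * w ^ r) - 1 ≤
      3 * V⁻¹ * Real.exp w := by
  have hVr : (V ^ (-(1 / (1 - r)))) ^ (1 - r) = V⁻¹ := by
    rw [← Real.rpow_mul hV.le, neg_mul, one_div_mul_cancel (sub_pos.2 hr1).ne', Real.rpow_neg_one]
  set y := V ^ (-(1 / (1 - r)))
  have hy : 0 < y := by positivity
  rw [← hVr]
  rcases le_total y 1 with hy1 | hy1
  · exact exp_log_rpow_mul_rpow_sub_one_le_of_le_one hr0 hr1.le hy.le hy1 hw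
  · have := exp_log_rpow_mul_rpow_le_of_one_le hr0 hr1.le hy1 hw
    have : 0 < y ^ (1 - r) * Real.exp w := by positivity
    linarith

lemma log_one_add_rpow_pos {V : ℝ} (hV : 0 < V) (s : ℝ) : 0 < Real.log (1 + V ^ s) :=
  Real.log_pos (lt_add_of_pos_right 1 (by positivity))

lemma div_rpow_mul_eq {p r κ ε L G t : ℝ} (hp : 0 < p) (hr : 0 < r) (hκ : 0 < κ) (hε : 0 < ε)
    (hL : 0 < L) (hG : 0 < G) (ht : 0 ≤ t) :
    (t / ((ε * κ ^ r) ^ (-(1 / (p * r))) * L ^ (-((1 - r) / (p * r))) * G)) ^ (p * r) =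
      ε * (L ^ (1 - r) * (κ * (t / G) ^ p) ^ r) := by
  have hpr : p * r ≠ 0 := by positivity
  rw [mul_comm _ G, ← div_div, Real.div_rpow (by positivity) (by positivity),
    Real.mul_rpow (by positivity) (by positivity), ← Real.rpow_mul (by positivity),
    ← Real.rpow_mul hL.le, neg_mul, neg_mul, div_mul_cancel₀ _ hpr, div_mul_cancel₀ _ hpr,
    Real.rpow_neg_one, Real.rpow_neg hL.le, Real.rpow_mul (by positivity),
    Real.mul_rpow hκ.le (by positivity)]
  field_simp

variable {E F : Type*} [NormedAddCommGroup E] [NormedSpace ℝ E] [FiniteDimensional ℝ E]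
  [MeasurableSpace E] [BorelSpace E] (μ : Measure E) [μ.IsAddHaarMeasure]
  [NormedAddCommGroup F] [InnerProductSpace ℝ F] {p r : ℝ}

lemma exists_lintegral_exp_rpow_sub_one_le_one (hp : (finrank ℝ E : ℝ).HolderConjugate p)
    (hr0 : 0 < r) (hr1 : r < 1) :
    ∃ C : ℝ, 0 < C ∧ ∀ Ω : Set E, μ Ω ≠ 0 → μ Ω ≠ ⊤ →
      ∀ u : E → F, ContDiff ℝ 1 u → HasCompactSupport u → Function.support u ⊆ Ω →
      ∀ G : ℝ, 0 < G → eLpNorm (fderiv ℝ u) (finrank ℝ E) μ ≤ ENNReal.ofReal G →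
        ∫⁻ x in Ω, ENNReal.ofReal (Real.exp ((‖u x‖ / (C *
          Real.log (1 + μ.real Ω ^ (-(1 / (1 - r)))) ^ (-((1 - r) / (p * r))) * G)) ^ (p * r)) - 1)
            ∂μ ≤ 1 := by
  obtain ⟨κ, hκ, A, hexp⟩ := exists_lintegral_exp_rpow_norm_le (F := F) μ hp
  have hp0 : 0 < p := hp.symm.pos
  -- `3 * ε * A ≤ 1` absorbs the constants; `ε ≤ 1` leaves the exponential by convexity.
  set ε : ℝ := (1 + 3 * A)⁻¹ with hε_def
  have hε : 0 < ε := by positivity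
  have hε1 : ε ≤ 1 := inv_le_one_of_one_le₀ (by linarith [A.coe_nonneg])
  refine ⟨(ε * κ ^ r) ^ (-(1 / (p * r))), by positivity,
    fun Ω hΩ0 hΩ u hu hsupp hsub G hG hDu => ?_⟩
  set V := μ.real Ω
  have hV : 0 < V := ENNReal.toReal_pos hΩ0 hΩ
  have hL := log_one_add_rpow_pos hV (-(1 / (1 - r)))
  have hpoint (x : E) : Real.exp ((‖u x‖ / ((ε * κ ^ r) ^ (-(1 / (p * r))) *
      Real.log (1 + V ^ (-(1 / (1 - r)))) ^ (-((1 - r) / (p * r))) * G)) ^ (p * r)) - 1 ≤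
        3 * ε * V⁻¹ * Real.exp (κ * (‖u x‖ / G) ^ p) := by
    rw [div_rpow_mul_eq hp0 hr0 hκ hε hL hG (norm_nonneg _)]
    refine (exp_mul_sub_one_le hε.le hε1 _).trans ?_
    have := exp_log_rpow_mul_rpow_sub_one_le hr0.le hr1 hV
      (show 0 ≤ κ * (‖u x‖ / G) ^ p by positivity)
    nlinarith
  have hsmall : 3 * ε * V⁻¹ * (A * V) ≤ 1 := by
    calc 3 * ε * V⁻¹ * (A * V) = 3 * A / (1 + 3 * A) := by rw [hε_def]; field_simp
      _ ≤ 1 := div_le_one_of_le₀ (by linarith) (by positivity)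
  calc _ ≤ ∫⁻ x in Ω, ENNReal.ofReal (3 * ε * V⁻¹) *
          ENNReal.ofReal (Real.exp (κ * (‖u x‖ / G) ^ p)) ∂μ := by
        refine lintegral_mono fun x => ?_
        rw [← ENNReal.ofReal_mul (by positivity)]
        exact ENNReal.ofReal_le_ofReal (hpoint x)
    _ ≤ ENNReal.ofReal (3 * ε * V⁻¹) * (A * μ Ω) := by
        rw [lintegral_const_mul' _ _ ENNReal.ofReal_ne_top]
        gcongr
        exact hexp Ω u hu hsupp hsub G hG hDu
    _ = ENNReal.ofReal (3 * ε * V⁻¹ * (A * V)) := by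
        rw [← ofReal_measureReal hΩ, ← ENNReal.ofReal_coe_nnreal,
          ← ENNReal.ofReal_mul A.coe_nonneg, ← ENNReal.ofReal_mul (by positivity)]
    _ ≤ 1 := ENNReal.ofReal_le_one.2 hsmall

end Modular

section LuxemburgNorm

/-- The Luxemburg norm of `v` in the exponential class `exp L^q(μ)`, i.e. for the Young function
`exp (t ^ q) - 1`. It takes values in `ℝ≥0∞`, the infimum of the empty set being `⊤`. -/
def expLuxNorm {α F : Type*} [MeasurableSpace α] [Norm F] (q : ℝ) (μ : Measure α) (v : α → F) :
    ℝ≥0∞ :=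
  ⨅ (lam : ℝ) (_ : 0 < lam) (_ : ∫⁻ x, ENNReal.ofReal (Real.exp ((‖v x‖ / lam) ^ q) - 1) ∂μ ≤ 1),
    ENNReal.ofReal lam

lemma expLuxNorm_le_ofReal {α F : Type*} [MeasurableSpace α] [Norm F] {q lam : ℝ} {μ : Measure α}
    {v : α → F} (hlam : 0 < lam)
    (hv : ∫⁻ x, ENNReal.ofReal (Real.exp ((‖v x‖ / lam) ^ q) - 1) ∂μ ≤ 1) :
    expLuxNorm q μ v ≤ ENNReal.ofReal lam :=
  iInf₂_le_of_le lam hlam (iInf_le _ hv)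

lemma integral_le_one_of_lintegral_ofReal_le_one {α : Type*} [MeasurableSpace α] {μ : Measure α}
    {f : α → ℝ} (hf0 : 0 ≤ f) (hf : ∫⁻ x, ENNReal.ofReal (f x) ∂μ ≤ 1) : ∫ x, f x ∂μ ≤ 1 := by
  by_cases hmeas : AEStronglyMeasurable f μ
  · rw [integral_eq_lintegral_of_nonneg_ae (Eventually.of_forall hf0) hmeas]
    exact ENNReal.toReal_le_of_le_ofReal zero_le_one (by simpa using hf)
  · rw [integral_non_aestronglyMeasurable hmeas]
    exact zero_le_one

lemma expNorm_le_of_expLuxNorm_le {n : ℕ} {s B : ℝ} {Ω : Set (Euc n)} {v : Euc n → ℝ}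
    (hB : 0 ≤ B)
    (h : expLuxNorm (s / (n - 1)) (volume.restrict Ω) v ≤ ENNReal.ofReal B) :
    expNorm n s Ω v ≤ B := by
  rw [← ENNReal.ofReal_le_ofReal_iff hB]
  refine le_trans (le_iInf₂ fun lam hlam => le_iInf fun hv => ?_) h
  refine ENNReal.ofReal_le_ofReal (csInf_le ⟨0, fun _ hy => hy.1.le⟩ ⟨hlam, ?_⟩)
  simp_rw [← Real.norm_eq_abs, norm_div, Real.norm_of_nonneg hlam.le]
  exact integral_le_one_of_lintegral_ofReal_le_one
    (fun x => sub_nonneg.2 (Real.one_le_exp (by positivity))) hv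

end LuxemburgNorm

lemma eLpNorm_fderiv_eq_ofReal_setIntegral_gradient {H : Type*} [NormedAddCommGroup H]
    [InnerProductSpace ℝ H] [CompleteSpace H] [MeasurableSpace H] [BorelSpace H]
    (μ : Measure H) [IsFiniteMeasureOnCompacts μ] {p : ℝ} (hp : 0 < p) {Ω : Set H} {u : H → ℝ}
    (hu : ContDiff ℝ 1 u) (hsupp : HasCompactSupport u) (hΩ : tsupport u ⊆ Ω) :
    eLpNorm (fderiv ℝ u) (ENNReal.ofReal p) μ =
      ENNReal.ofReal ((∫ x in Ω, ‖gradient u x‖ ^ p ∂μ) ^ (1 / p)) := by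
  have hnorm (x : H) : ‖gradient u x‖ = ‖fderiv ℝ u x‖ := LinearIsometryEquiv.norm_map _ _
  have hmem : MemLp (fderiv ℝ u) (ENNReal.ofReal p) μ :=
    (hu.continuous_fderiv one_ne_zero).memLp_of_hasCompactSupport (hsupp.fderiv ℝ)
  have houtside (x : H) (hx : x ∉ Ω) : ‖fderiv ℝ u x‖ ^ p = 0 := by
    have : fderiv ℝ u x = 0 :=
      Function.notMem_support.1 fun hDu => hx (hΩ (support_fderiv_subset ℝ hDu))
    rw [this, norm_zero, Real.zero_rpow hp.ne']
  simp_rw [hnorm]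
  rw [setIntegral_eq_integral_of_forall_compl_eq_zero houtside,
    hmem.eLpNorm_eq_integral_rpow_norm (by simpa using hp) ENNReal.ofReal_ne_top,
    ENNReal.toReal_ofReal hp.le, one_div]

lemma le_ofReal_mul_of_forall_lt {a b : ℝ≥0∞} {c : ℝ} (hc : 0 < c)
    (h : ∀ t : ℝ, 0 < t → b < ENNReal.ofReal t → a ≤ ENNReal.ofReal (c * t)) :
    a ≤ ENNReal.ofReal c * b := by
  rw [← ENNReal.div_le_iff' (ENNReal.ofReal_pos.2 hc).ne' ENNReal.ofReal_ne_top]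
  refine le_of_forall_gt_imp_ge_of_dense fun d hd => ?_
  rcases eq_or_ne d ⊤ with rfl | hdtop
  · exact le_top
  rw [← ENNReal.ofReal_toReal hdtop] at hd ⊢
  exact ENNReal.div_le_of_le_mul' <| (h _ (ENNReal.ofReal_pos.1 (bot_le.trans_lt hd)) hd).trans_eq
    (ENNReal.ofReal_mul hc.le)

theorem stmt_7_general {E F : Type*} [NormedAddCommGroup E] [NormedSpace ℝ E]
    [FiniteDimensional ℝ E] [MeasurableSpace E] [BorelSpace E] (μ : Measure E)
    [μ.IsAddHaarMeasure] [NormedAddCommGroup F] [InnerProductSpace ℝ F] {n : ℕ}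
    (hn : 2 ≤ n) (hE : finrank ℝ E = n) {r : ℝ} (hr0 : 0 < r) (hr1 : r < 1) :
    ∃ C : ℝ, 0 < C ∧ ∀ Ω : Set E, μ Ω ≠ 0 → μ Ω ≠ ⊤ →
      ∀ u : E → F, ContDiff ℝ 1 u → HasCompactSupport u → Function.support u ⊆ Ω →
        expLuxNorm (n * r / (n - 1)) (μ.restrict Ω) u ≤
          ENNReal.ofReal (C * Real.log (1 + μ.real Ω ^ (-(1 / (1 - r)))) ^
            (-((n - 1) * (1 - r) / (n * r)))) * eLpNorm (fderiv ℝ u) n μ := by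
  subst hE
  have hconj := Real.HolderConjugate.conjExponent (Nat.one_lt_cast (α := ℝ).2 hn)
  obtain ⟨C, hC, hmod⟩ := exists_lintegral_exp_rpow_sub_one_le_one (F := F) μ hconj hr0 hr1
  refine ⟨C, hC, fun Ω hΩ0 hΩ u hu hsupp hsub => ?_⟩
  have hn1 : 0 < (finrank ℝ E : ℝ) - 1 := hconj.sub_one_pos
  have hL : 0 < Real.log (1 + μ.real Ω ^ (-(1 / (1 - r)))) :=
    log_one_add_rpow_pos (ENNReal.toReal_pos hΩ0 hΩ) _
  have hexponent : (finrank ℝ E : ℝ) * r / (finrank ℝ E - 1) =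
      Real.conjExponent (finrank ℝ E) * r := by
    rw [Real.conjExponent, div_mul_eq_mul_div]
  have hδ : ((finrank ℝ E : ℝ) - 1) * (1 - r) / (finrank ℝ E * r) =
      (1 - r) / (Real.conjExponent (finrank ℝ E) * r) := by
    rw [Real.conjExponent]
    field_simp
  rw [hexponent, hδ]
  exact le_ofReal_mul_of_forall_lt (by positivity) fun G hG hDu =>
    expLuxNorm_le_ofReal (by positivity) (hmod Ω hΩ0 hΩ u hu hsupp hsub G hG hDu.le)

/-- **Lemma 2.2 A (Moser–Trudinger inequality for `E_{nr}`).**  For `n ≥ 2`, `0 < r < 1`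
and `δ = (n-1)(1-r)/(nr)` there is `C = C(n,r)` such that for every ball `B_R` and every
`C¹` function `u` compactly supported in `B_R`:
`‖u‖_{E_{nr},B_R} ≤ C (log(1 + |B_R|^{-1/(1-r)}))^{-δ} ‖∇u‖_{L^n(B_R)}`. -/
theorem stmt_7 (n : ℕ) (hn : 2 ≤ n) (r : ℝ) (hr0 : 0 < r) (hr1 : r < 1) :
    ∃ C : ℝ, 0 < C ∧
      ∀ (z : Euc n) (R : ℝ), 0 < R →
      ∀ u : Euc n → ℝ, ContDiff ℝ 1 u → HasCompactSupport u → tsupport u ⊆ ball z R →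
        expNorm n ((n:ℝ)*r) (ball z R) u
          ≤ C * (Real.log (1 + ((volume (ball z R)).toReal) ^ (-(1/(1-r)))))
                ^ (-(((n:ℝ)-1)*(1-r)/((n:ℝ)*r)))
            * (∫ x in ball z R, ‖gradient u x‖ ^ (n:ℝ)) ^ (1/(n:ℝ)) := by
  obtain ⟨C, hC, hMT⟩ := stmt_7_general (E := Euc n) (F := ℝ) volume hn finrank_euclideanSpace_fin
    hr0 hr1
  refine ⟨C, hC, fun z R hR u hu hcs hsupp => ?_⟩
  have hball0 : volume (ball z R) ≠ 0 := (measure_ball_pos volume z hR).ne'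
  have hball : volume (ball z R) ≠ ⊤ := measure_ball_lt_top.ne
  have hL := log_one_add_rpow_pos (ENNReal.toReal_pos hball0 hball) (-(1 / (1 - r)))
  refine expNorm_le_of_expLuxNorm_le (by positivity) ?_
  rw [ENNReal.ofReal_mul (by positivity), ← eLpNorm_fderiv_eq_ofReal_setIntegral_gradient volume
    (Nat.cast_pos.2 (by omega)) hu hcs hsupp, ENNReal.ofReal_natCast]
  exact hMT (ball z R) hball0 hball u hu hcs ((subset_tsupport u).trans hsupp)
end
end

section
/- (Moser–Trudinger inequality for the E_n functional with explicit constant.) Let n ≥ 2 and let σ be the (n−1)-dimensional surface measure of the unit sphere in ℝ^n, and set C_n = (σ n^{n−1})^{1/n}. Then for every ball B_R ⊂ ℝ^n and every continuously differentiable function u with compact support contained in B_R, one has ‖u‖_{E_n,B_R} ≤ C_n^{−1} (|B_R| + 1)^{(n−1)/n} (∫_{B_R} |∇u|^n dx)^{1/n}, where |B_R| is the Lebesgue measure of B_R. -/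
open MeasureTheory Metric Filter
open scoped ENNReal RealInnerProductSpace Topology

noncomputable section

/-- The `(n-1)`-dimensional surface measure of the unit sphere in `ℝ^n`,
given by the standard identity `σ = n ⬝ |B₁|`. -/
def sigmaSurf (n : ℕ) : ℝ := (n:ℝ) * (volume (ball (0 : Euc n) 1)).toReal

/-!
The Prékopa–Leindler inequality gives the Brunn–Minkowski inequality, hence the isoperimetric
inequality `|A + B_ε| ≥ |A| + ε c |A|^{(d-1)/d}` with the sharp constant `c`. Applied to the
superlevel sets of `‖u‖`, whose `ε`-thickening only reaches points where `‖u‖` is at most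
`ε ‖Du‖ + o(ε)` below the level, it bounds `c φ(t)^{(d-1)/d} dt` by the push-forward of `‖Du‖ dx`
under `‖u‖`, where `φ(t) = |{‖u‖ ≥ t}|`; this takes the place of the coarea formula. Testing with
`φ^{-(d-1)/d}` on `(0, T)` and using Hölder's inequality yields
`c T ≤ ‖Du‖_{L^d} (∫_{‖u‖ < T} dx / φ(‖u(x)‖))^{(d-1)/d} ≤ ‖Du‖_{L^d} log(V / φ(T))^{(d-1)/d}`,
with `V` the measure of the support of `u`. So `φ` decays exponentially in `T^{d/(d-1)}`, and the
layer cake formula turns this into exponential integrability; the factor `(V + 1)^{(d-1)/d}` makes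
the resulting integral `∫_0^∞ V (1 + s)^{-V-1} ds` at most `1`.
-/

namespace MoserTrudinger

open Module Set
open scoped Pointwise

section LayerCake

variable {α : Type*} [MeasurableSpace α] {μ : Measure α} {f : α → ℝ≥0∞}

lemma volume_Ioi_inter_setOf_ofReal_lt (a : ℝ≥0∞) :
    volume (Ioi 0 ∩ {t : ℝ | ENNReal.ofReal t < a}) = a := by
  rcases eq_or_ne a ⊤ with rfl | ha
  · simp
  · have : Ioi 0 ∩ {t : ℝ | ENNReal.ofReal t < a} = Ioo 0 a.toReal := by
      ext t
      exact and_congr_right fun ht : 0 < t => ENNReal.ofReal_lt_iff_lt_toReal ht.le ha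
    rw [this, Real.volume_Ioo, sub_zero, ENNReal.ofReal_toReal ha]

lemma measurable_meas_ofReal_lt : Measurable fun t : ℝ => μ {x | ENNReal.ofReal t < f x} :=
  Antitone.measurable fun _ _ hst =>
    measure_mono fun _ hx => (ENNReal.ofReal_le_ofReal hst).trans_lt hx

lemma lintegral_eq_lintegral_meas_ofReal_lt [SFinite μ] (hf : Measurable f) :
    ∫⁻ x, f x ∂μ = ∫⁻ t in Ioi (0 : ℝ), μ {x | ENNReal.ofReal t < f x} := by
  let S : Set (α × ℝ) := {p | ENNReal.ofReal p.2 < f p.1}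
  have hS : MeasurableSet S := measurableSet_lt (by fun_prop) (by fun_prop)
  calc
    ∫⁻ x, f x ∂μ = ∫⁻ x, volume.restrict (Ioi 0) (Prod.mk x ⁻¹' S) ∂μ := by
      refine lintegral_congr fun x => ?_
      rw [Measure.restrict_apply (measurable_prodMk_left hS), inter_comm]
      exact (volume_Ioi_inter_setOf_ofReal_lt (f x)).symm
    _ = (μ.prod (volume.restrict (Ioi 0))) S := (Measure.prod_apply hS).symm
    _ = ∫⁻ t in Ioi (0 : ℝ), μ {x | ENNReal.ofReal t < f x} := Measure.prod_apply_symm hS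

end LayerCake

section OneDimensional

variable {A B : Set ℝ}

lemma volume_add_volume_le_of_isCompact (hA : IsCompact A) (hB : IsCompact B) (hA₀ : A.Nonempty)
    (hB₀ : B.Nonempty) : volume A + volume B ≤ volume (A + B) := by
  obtain ⟨a, haA, ha⟩ := hA.exists_isGreatest hA₀
  obtain ⟨b, hbB, hb⟩ := hB.exists_isLeast hB₀
  have hinter : (b +ᵥ A) ∩ (a +ᵥ B) ⊆ {a + b} := by
    rintro _ ⟨⟨x, hx, rfl⟩, ⟨y, hy, hxy⟩⟩
    have hxa := ha hx
    have hby := hb hy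
    simp only [vadd_eq_add, mem_singleton_iff] at hxy ⊢
    linarith
  have hunion : (b +ᵥ A) ∪ (a +ᵥ B) ⊆ A + B := by
    rintro _ (⟨x, hx, rfl⟩ | ⟨y, hy, rfl⟩)
    · exact ⟨x, hx, b, hbB, add_comm x b⟩
    · exact ⟨a, haA, y, hy, rfl⟩
  calc
    volume A + volume B = volume (b +ᵥ A) + volume (a +ᵥ B) := by simp only [measure_vadd]
    _ = volume ((b +ᵥ A) ∪ (a +ᵥ B)) :=
      (measure_union₀ (hB.measurableSet.const_vadd a).nullMeasurableSet
        (measure_mono_null hinter Real.volume_singleton)).symm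
    _ ≤ volume (A + B) := measure_mono hunion

lemma volume_add_volume_le (hA : MeasurableSet A) (hB : MeasurableSet B) (hA₀ : A.Nonempty)
    (hB₀ : B.Nonempty) : volume A + volume B ≤ volume (A + B) := by
  obtain ⟨a, ha⟩ := hA₀
  obtain ⟨b, hb⟩ := hB₀
  have hcompact : ∀ K ⊆ A, ∀ L ⊆ B, IsCompact K → IsCompact L →
      volume K + volume L ≤ volume (A + B) := fun K hKA L hLB hK hL => calc
    volume K + volume L ≤ volume (insert a K) + volume (insert b L) := by gcongr <;> simp
    _ ≤ volume (insert a K + insert b L) :=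
      volume_add_volume_le_of_isCompact (hK.insert a) (hL.insert b)
        (insert_nonempty a K) (insert_nonempty b L)
    _ ≤ volume (A + B) :=
      measure_mono (add_subset_add (insert_subset ha hKA) (insert_subset hb hLB))
  rw [hA.measure_eq_iSup_isCompact, hB.measure_eq_iSup_isCompact]
  simp only [iSup_and']
  refine ENNReal.biSup_add_biSup_le (s := {K | K ⊆ A ∧ IsCompact K})
    (t := {L | L ⊆ B ∧ IsCompact L}) ⟨∅, empty_subset A, isCompact_empty⟩
    ⟨∅, empty_subset B, isCompact_empty⟩ fun K hK L hL => hcompact K hK.1 L hL.1 hK.2 hL.2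

lemma ofReal_mul_volume_add_ofReal_mul_volume_le (hA : MeasurableSet A) (hB : MeasurableSet B)
    (hA₀ : A.Nonempty) (hB₀ : B.Nonempty) (p q : ℝ) :
    ENNReal.ofReal |p| * volume A + ENNReal.ofReal |q| * volume B ≤ volume (p • A + q • B) := by
  simpa only [Measure.addHaar_smul, finrank_self, pow_one] using
    volume_add_volume_le (hA.const_smul₀ p) (hB.const_smul₀ q) hA₀.smul_set hB₀.smul_set

end OneDimensional

section PrekopaLeindler

variable {p q : ℝ}

lemma rpow_mul_rpow_le_ofReal_mul_add (hp : 0 < p) (hq : 0 < q) (hpq : p + q = 1) (a b : ℝ≥0∞) :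
    a ^ p * b ^ q ≤ ENNReal.ofReal p * a + ENNReal.ofReal q * b := by
  have hconj : p⁻¹.HolderConjugate q⁻¹ :=
    Real.holderConjugate_iff.2 ⟨(one_lt_inv₀ hp).2 (by linarith), by simpa using hpq⟩
  have hyoung := ENNReal.young_inequality (a ^ p) (b ^ q) hconj
  rwa [ENNReal.rpow_rpow_inv hp.ne', ENNReal.rpow_rpow_inv hq.ne', div_eq_mul_inv, div_eq_mul_inv,
    ENNReal.ofReal_inv_of_pos hp, ENNReal.ofReal_inv_of_pos hq, inv_inv, inv_inv, mul_comm a,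
    mul_comm b] at hyoung

lemma smul_setOf_lt_add_smul_setOf_lt_subset {E : Type*} [Add E] [SMul ℝ E] {f g h : E → ℝ≥0∞}
    (hp : 0 < p) (hq : 0 < q) (H : ∀ x y, f x ^ p * g y ^ q ≤ h (p • x + q • y)) (a b : ℝ≥0∞) :
    p • {x | a < f x} + q • {y | b < g y} ⊆ {z | a ^ p * b ^ q < h z} := by
  rintro _ ⟨_, ⟨x, hx, rfl⟩, _, ⟨y, hy, rfl⟩, rfl⟩
  exact (ENNReal.mul_lt_mul (ENNReal.rpow_lt_rpow hx hp) (ENNReal.rpow_lt_rpow hy hq)).trans_le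
    (H x y)

variable {f g h : ℝ → ℝ≥0∞}

lemma ofReal_mul_lintegral_add_le_of_iSup_eq_one (hp : 0 < p) (hq : 0 < q) (hpq : p + q = 1)
    (hf : Measurable f) (hg : Measurable g) (hh : Measurable h)
    (hf₁ : ⨆ x, f x = 1) (hg₁ : ⨆ x, g x = 1)
    (H : ∀ x y, f x ^ p * g y ^ q ≤ h (p • x + q • y)) :
    ENNReal.ofReal p * (∫⁻ x, f x) + ENNReal.ofReal q * (∫⁻ x, g x) ≤ ∫⁻ x, h x := by
  rw [lintegral_eq_lintegral_meas_ofReal_lt hf, lintegral_eq_lintegral_meas_ofReal_lt hg,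
    lintegral_eq_lintegral_meas_ofReal_lt hh, ← lintegral_const_mul _ measurable_meas_ofReal_lt,
    ← lintegral_const_mul _ measurable_meas_ofReal_lt,
    ← lintegral_add_left (measurable_meas_ofReal_lt.const_mul _)]
  refine setLIntegral_mono measurable_meas_ofReal_lt fun t (ht : 0 < t) => ?_
  rcases le_or_gt 1 (ENNReal.ofReal t) with ht₁ | ht₁
  · have hempty : ∀ F : ℝ → ℝ≥0∞, ⨆ x, F x = 1 → {x | ENNReal.ofReal t < F x} = ∅ := fun F hF =>
      eq_empty_of_forall_notMem fun x hx => (hx.trans_le ((le_iSup F x).trans hF.le)).not_ge ht₁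
    simp [hempty f hf₁, hempty g hg₁]
  · have hnonempty : ∀ F : ℝ → ℝ≥0∞, ⨆ x, F x = 1 → {x | ENNReal.ofReal t < F x}.Nonempty :=
      fun F hF => lt_iSup_iff.1 (ht₁.trans_eq hF.symm)
    have ht_pow : ENNReal.ofReal t ^ p * ENNReal.ofReal t ^ q = ENNReal.ofReal t := by
      rw [← ENNReal.rpow_add p q (by simpa using ht) ENNReal.ofReal_ne_top, hpq, ENNReal.rpow_one]
    have hBM := ofReal_mul_volume_add_ofReal_mul_volume_le (measurableSet_lt measurable_const hf)
      (measurableSet_lt measurable_const hg) (hnonempty f hf₁) (hnonempty g hg₁) p q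
    rw [abs_of_pos hp, abs_of_pos hq] at hBM
    refine hBM.trans (measure_mono ?_)
    simpa only [ht_pow] using smul_setOf_lt_add_smul_setOf_lt_subset hp hq H
      (ENNReal.ofReal t) (ENNReal.ofReal t)

lemma lintegral_rpow_mul_lintegral_rpow_le_of_iSup_ne_top (hp : 0 < p) (hq : 0 < q)
    (hpq : p + q = 1) (hf : Measurable f) (hg : Measurable g) (hh : Measurable h)
    (hf_top : ⨆ x, f x ≠ ⊤) (hg_top : ⨆ x, g x ≠ ⊤)
    (H : ∀ x y, f x ^ p * g y ^ q ≤ h (p • x + q • y)) :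
    (∫⁻ x, f x) ^ p * (∫⁻ x, g x) ^ q ≤ ∫⁻ x, h x := by
  set M := ⨆ x, f x with hM
  set N := ⨆ x, g x with hN
  rcases eq_or_ne M 0 with hM₀ | hM₀
  · simp [ENNReal.iSup_eq_zero.1 hM₀, hp]
  rcases eq_or_ne N 0 with hN₀ | hN₀
  · simp [ENNReal.iSup_eq_zero.1 hN₀, hq]
  have hMN₀ : M⁻¹ ^ p * N⁻¹ ^ q ≠ 0 := by
    simp [ENNReal.rpow_eq_zero_iff, hM₀, hN₀, hf_top, hg_top]
  have hMN_top : M⁻¹ ^ p * N⁻¹ ^ q ≠ ⊤ := by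
    simp [ENNReal.mul_eq_top, ENNReal.rpow_eq_top_iff, hM₀, hN₀, hf_top, hg_top, hp.not_gt,
      hq.not_gt]
  have hscale (a b : ℝ≥0∞) :
      (M⁻¹ * a) ^ p * (N⁻¹ * b) ^ q = M⁻¹ ^ p * N⁻¹ ^ q * (a ^ p * b ^ q) := by
    rw [ENNReal.mul_rpow_of_nonneg _ _ hp.le, ENNReal.mul_rpow_of_nonneg _ _ hq.le]
    ring
  have hnormalized := ofReal_mul_lintegral_add_le_of_iSup_eq_one hp hq hpq (hf.const_mul M⁻¹)
    (hg.const_mul N⁻¹) (hh.const_mul (M⁻¹ ^ p * N⁻¹ ^ q))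
    (by rw [← ENNReal.mul_iSup, ← hM, ENNReal.inv_mul_cancel hM₀ hf_top])
    (by rw [← ENNReal.mul_iSup, ← hN, ENNReal.inv_mul_cancel hN₀ hg_top])
    fun x y => (hscale _ _).trans_le (by gcongr; exact H x y)
  simp only [lintegral_const_mul _ hf, lintegral_const_mul _ hg, lintegral_const_mul _ hh]
    at hnormalized
  rw [← ENNReal.mul_le_mul_iff_right hMN₀ hMN_top, ← hscale]
  exact (rpow_mul_rpow_le_ofReal_mul_add hp hq hpq _ _).trans hnormalized

lemma tendsto_lintegral_min_natCast {α : Type*} [MeasurableSpace α] {μ : Measure α}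
    {f : α → ℝ≥0∞} (hf : Measurable f) :
    Tendsto (fun k : ℕ => ∫⁻ x, min (f x) k ∂μ) atTop (𝓝 (∫⁻ x, f x ∂μ)) := by
  refine lintegral_tendsto_of_tendsto_of_monotone (fun k => by fun_prop)
    (ae_of_all _ fun x i j hij => by dsimp only; gcongr) (ae_of_all _ fun x => ?_)
  simpa using (tendsto_const_nhds (x := f x)).min ENNReal.tendsto_nat_nhds_top

lemma lintegral_rpow_mul_lintegral_rpow_le_real (hp : 0 < p) (hq : 0 < q) (hpq : p + q = 1)
    (hf : Measurable f) (hg : Measurable g) (hh : Measurable h)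
    (H : ∀ x y, f x ^ p * g y ^ q ≤ h (p • x + q • y)) :
    (∫⁻ x, f x) ^ p * (∫⁻ x, g x) ^ q ≤ ∫⁻ x, h x := by
  rcases eq_or_ne (∫⁻ x, f x) 0 with hf₀ | hf₀
  · simp [hf₀, hp]
  rcases eq_or_ne (∫⁻ x, g x) 0 with hg₀ | hg₀
  · simp [hg₀, hq]
  have hlim := ENNReal.Tendsto.mul
    ((tendsto_lintegral_min_natCast (μ := volume) hf).ennrpow_const p)
    (Or.inl (by simp [ENNReal.rpow_eq_zero_iff, hf₀, hp.not_gt]))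
    ((tendsto_lintegral_min_natCast (μ := volume) hg).ennrpow_const q)
    (Or.inl (by simp [ENNReal.rpow_eq_zero_iff, hg₀, hq.not_gt]))
  have hbounded : ∀ (F : ℝ → ℝ≥0∞) (k : ℕ), ⨆ x, min (F x) k ≠ ⊤ := fun F k =>
    ne_top_of_le_ne_top (ENNReal.natCast_ne_top k) (iSup_le fun x => min_le_right _ _)
  refine le_of_tendsto' hlim fun k => ?_
  refine lintegral_rpow_mul_lintegral_rpow_le_of_iSup_ne_top hp hq hpq (by fun_prop) (by fun_prop)
    hh (hbounded f k) (hbounded g k) fun x y => le_trans ?_ (H x y)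
  gcongr <;> exact min_le_left _ _

lemma lintegral_rpow_mul_lintegral_rpow_le_pi (hp : 0 < p) (hq : 0 < q) (hpq : p + q = 1) (n : ℕ)
    {f g h : (Fin n → ℝ) → ℝ≥0∞} (hf : Measurable f) (hg : Measurable g) (hh : Measurable h)
    (H : ∀ x y, f x ^ p * g y ^ q ≤ h (p • x + q • y)) :
    (∫⁻ x, f x) ^ p * (∫⁻ x, g x) ^ q ≤ ∫⁻ x, h x := by
  induction n with
  | zero =>
    have huniv : (volume : Measure (Fin 0 → ℝ)) Set.univ = 1 := by simp [volume_pi]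
    simp only [lintegral_unique, huniv, mul_one]
    convert H default default
  | succ n ih =>
    let e := (MeasurableEquiv.piFinSuccAbove (fun _ : Fin (n + 1) => ℝ) 0).symm
    have hslice (s : ℝ) : Measurable fun y : Fin n → ℝ => e (s, y) :=
      e.measurable.comp measurable_prodMk_left
    have hlin (s t : ℝ) (x y : Fin n → ℝ) :
        p • e (s, x) + q • e (t, y) = e (p • s + q • t, p • x + q • y) := by
      ext i
      refine Fin.cases ?_ (fun j => ?_) i <;>
        simp [e, MeasurableEquiv.piFinSuccAbove, Fin.insertNthEquiv]
    have hfubini {F : (Fin (n + 1) → ℝ) → ℝ≥0∞} (hF : Measurable F) :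
        ∫⁻ x, F x = ∫⁻ t : ℝ, ∫⁻ y : Fin n → ℝ, F (e (t, y)) := by
      rw [← (volume_preserving_piFinSuccAbove (fun _ : Fin (n + 1) => ℝ) 0).symm.lintegral_comp hF]
      exact lintegral_prod _ (hF.comp e.measurable).aemeasurable
    have hmeas {F : (Fin (n + 1) → ℝ) → ℝ≥0∞} (hF : Measurable F) :
        Measurable fun t : ℝ => ∫⁻ y : Fin n → ℝ, F (e (t, y)) :=
      (hF.comp e.measurable).lintegral_prod_right'
    rw [hfubini hf, hfubini hg, hfubini hh]
    refine lintegral_rpow_mul_lintegral_rpow_le_real hp hq hpq (hmeas hf) (hmeas hg) (hmeas hh)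
      fun s t => ih (hf.comp (hslice s)) (hg.comp (hslice t)) (hh.comp (hslice _)) fun x y => ?_
    rw [← hlin]
    exact H _ _

end PrekopaLeindler

section BrunnMinkowski

lemma exists_pos_ofReal_pow_eq {x : ℝ≥0∞} (hx₀ : x ≠ 0) (hx_top : x ≠ ⊤) {n : ℕ} (hn : n ≠ 0) :
    ∃ a : ℝ, 0 < a ∧ x = ENNReal.ofReal (a ^ n) := by
  have hpos : 0 < x.toReal := ENNReal.toReal_pos hx₀ hx_top
  refine ⟨x.toReal ^ (n : ℝ)⁻¹, by positivity, ?_⟩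
  rw [Real.rpow_inv_natCast_pow hpos.le hn, ENNReal.ofReal_toReal hx_top]

variable {E : Type*} [NormedAddCommGroup E] [NormedSpace ℝ E] [FiniteDimensional ℝ E]
  [MeasurableSpace E] [BorelSpace E] (μ : Measure E) [μ.IsAddHaarMeasure]

theorem prekopa_leindler {p q : ℝ} (hp : 0 < p) (hq : 0 < q) (hpq : p + q = 1)
    {f g h : E → ℝ≥0∞} (hf : Measurable f) (hg : Measurable g) (hh : Measurable h)
    (H : ∀ x y, f x ^ p * g y ^ q ≤ h (p • x + q • y)) :
    (∫⁻ x, f x ∂μ) ^ p * (∫⁻ x, g x ∂μ) ^ q ≤ ∫⁻ x, h x ∂μ := by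
  let e : (Fin (finrank ℝ E) → ℝ) ≃L[ℝ] E := ContinuousLinearEquiv.ofFinrankEq (by simp)
  let c : ℝ≥0∞ := Measure.addHaarScalarFactor μ ((volume : Measure (Fin (finrank ℝ E) → ℝ)).map e)
  have hc₀ : c ≠ 0 :=
    ENNReal.coe_ne_zero.2 (Measure.addHaarScalarFactor_pos_of_isAddHaarMeasure _ _).ne'
  have hc_top : c ≠ ⊤ := ENNReal.coe_ne_top
  have hμ : μ = c • (volume : Measure (Fin (finrank ℝ E) → ℝ)).map e :=
    Measure.isAddLeftInvariant_eq_smul μ _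
  have hint {F : E → ℝ≥0∞} (hF : Measurable F) : ∫⁻ x, F x ∂μ = c * ∫⁻ x, F (e x) := by
    rw [hμ, lintegral_smul_measure, smul_eq_mul, lintegral_map hF e.continuous.measurable]
  have hpi := lintegral_rpow_mul_lintegral_rpow_le_pi hp hq hpq _
    (hf.comp e.continuous.measurable) (hg.comp e.continuous.measurable)
    (hh.comp e.continuous.measurable) fun x y => by simpa using H (e x) (e y)
  rw [hint hf, hint hg, hint hh, ENNReal.mul_rpow_of_nonneg _ _ hp.le,
    ENNReal.mul_rpow_of_nonneg _ _ hq.le, mul_mul_mul_comm, ← ENNReal.rpow_add p q hc₀ hc_top, hpq,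
    ENNReal.rpow_one]
  gcongr
  exact hpi

variable {A B : Set E}

theorem measure_rpow_mul_measure_rpow_le (hA : MeasurableSet A) (hB : MeasurableSet B) {p q : ℝ}
    (hp : 0 < p) (hq : 0 < q) (hpq : p + q = 1) : μ A ^ p * μ B ^ q ≤ μ (p • A + q • B) := by
  let C := toMeasurable μ (p • A + q • B)
  have hC : MeasurableSet C := measurableSet_toMeasurable _ _
  have hindicator (x y : E) : A.indicator (1 : E → ℝ≥0∞) x ^ p * B.indicator 1 y ^ q
      ≤ C.indicator 1 (p • x + q • y) := by
    by_cases hx : x ∈ A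
    · by_cases hy : y ∈ B
      · have hxy : p • x + q • y ∈ C :=
          subset_toMeasurable _ _ (add_mem_add (smul_mem_smul_set hx) (smul_mem_smul_set hy))
        simp [hx, hy, hxy]
      · simp [hy, hq]
    · simp [hx, hp]
  simpa only [lintegral_indicator_one, hA, hB, hC, C, measure_toMeasurable] using
    prekopa_leindler μ hp hq hpq (measurable_one.indicator hA) (measurable_one.indicator hB)
      (measurable_one.indicator hC) hindicator

lemma measure_div_inv_smul {a s : ℝ} (ha : 0 < a) (hs : 0 < s)
    (hA : μ A = ENNReal.ofReal (a ^ finrank ℝ E)) :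
    μ ((a / s)⁻¹ • A) = ENNReal.ofReal (s ^ finrank ℝ E) := by
  rw [Measure.addHaar_smul, hA, ← ENNReal.ofReal_mul (abs_nonneg _), abs_of_pos (by positivity),
    ← mul_pow]
  congr 2
  field_simp

lemma ofReal_add_pow_le_measure_add (hA : MeasurableSet A) (hB : MeasurableSet B) {a b : ℝ}
    (ha : 0 < a) (hb : 0 < b) (hμA : μ A = ENNReal.ofReal (a ^ finrank ℝ E))
    (hμB : μ B = ENNReal.ofReal (b ^ finrank ℝ E)) :
    ENNReal.ofReal ((a + b) ^ finrank ℝ E) ≤ μ (A + B) := by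
  have hab : 0 < a + b := add_pos ha hb
  have hp : 0 < a / (a + b) := by positivity
  have hq : 0 < b / (a + b) := by positivity
  have hpq : a / (a + b) + b / (a + b) = 1 := by field_simp
  have hmul := measure_rpow_mul_measure_rpow_le μ (hA.const_smul₀ (a / (a + b))⁻¹)
    (hB.const_smul₀ (b / (a + b))⁻¹) hp hq hpq
  rwa [measure_div_inv_smul μ ha hab hμA, measure_div_inv_smul μ hb hab hμB,
    ← ENNReal.rpow_add _ _ (by positivity) ENNReal.ofReal_ne_top, hpq, ENNReal.rpow_one,
    smul_inv_smul₀ hp.ne', smul_inv_smul₀ hq.ne'] at hmul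

lemma measure_le_measure_add_left (hA : A.Nonempty) (B : Set E) : μ B ≤ μ (A + B) := by
  obtain ⟨a, ha⟩ := hA
  rw [← measure_vadd μ a B]
  exact measure_mono (vadd_set_subset_add ha)

variable [Nontrivial E]

theorem brunn_minkowski (hA : MeasurableSet A) (hB : MeasurableSet B) (hA₀ : A.Nonempty)
    (hB₀ : B.Nonempty) :
    μ A ^ (finrank ℝ E : ℝ)⁻¹ + μ B ^ (finrank ℝ E : ℝ)⁻¹ ≤ μ (A + B) ^ (finrank ℝ E : ℝ)⁻¹ := by
  have hd : finrank ℝ E ≠ 0 := finrank_pos.ne'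
  have hB_le : μ B ≤ μ (A + B) := measure_le_measure_add_left μ hA₀ B
  have hA_le : μ A ≤ μ (A + B) := add_comm B A ▸ measure_le_measure_add_left μ hB₀ A
  rcases eq_or_ne (μ A) 0 with hμA | hμA
  · rw [hμA, ENNReal.zero_rpow_of_pos (by positivity), zero_add]
    gcongr
  rcases eq_or_ne (μ B) 0 with hμB | hμB
  · rw [hμB, ENNReal.zero_rpow_of_pos (by positivity), add_zero]
    gcongr
  rcases eq_or_ne (μ (A + B)) ⊤ with htop | htop
  · rw [htop, ENNReal.top_rpow_of_pos (by positivity)]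
    exact le_top
  obtain ⟨a, ha, hμa⟩ :=
    exists_pos_ofReal_pow_eq hμA (ne_top_of_le_ne_top htop hA_le) hd
  obtain ⟨b, hb, hμb⟩ :=
    exists_pos_ofReal_pow_eq hμB (ne_top_of_le_ne_top htop hB_le) hd
  have hroot {s : ℝ} (hs : 0 < s) :
      ENNReal.ofReal (s ^ finrank ℝ E) ^ (finrank ℝ E : ℝ)⁻¹ = ENNReal.ofReal s := by
    rw [ENNReal.ofReal_rpow_of_pos (by positivity), Real.pow_rpow_inv_natCast hs.le hd]
  calc
    μ A ^ (finrank ℝ E : ℝ)⁻¹ + μ B ^ (finrank ℝ E : ℝ)⁻¹ = ENNReal.ofReal (a + b) := by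
      rw [hμa, hμb, hroot ha, hroot hb, ENNReal.ofReal_add ha.le hb.le]
    _ = ENNReal.ofReal ((a + b) ^ finrank ℝ E) ^ (finrank ℝ E : ℝ)⁻¹ := (hroot (by positivity)).symm
    _ ≤ μ (A + B) ^ (finrank ℝ E : ℝ)⁻¹ := by
      gcongr
      exact ofReal_add_pow_le_measure_add μ hA hB ha hb hμa hμb

end BrunnMinkowski

section Isoperimetric

variable {E : Type*} [NormedAddCommGroup E] [NormedSpace ℝ E] [MeasurableSpace E] (μ : Measure E)

/-- The sharp constant `c = d |B₁|^{1/d}` in the isoperimetric inequality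
`c |A|^{(d-1)/d} ≤ |∂A|` of a `d`-dimensional normed space `E` with Haar measure `μ`, where `B₁` is
the unit ball of `E`. -/
def isoperimetricConst : ℝ :=
  finrank ℝ E * (μ (ball (0 : E) 1)).toReal ^ (finrank ℝ E : ℝ)⁻¹

variable [FiniteDimensional ℝ E] [μ.IsAddHaarMeasure]

lemma isoperimetricConst_pos [Nontrivial E] : 0 < isoperimetricConst μ := by
  have hball : 0 < (μ (ball (0 : E) 1)).toReal :=
    ENNReal.toReal_pos (measure_ball_pos μ _ one_pos).ne' measure_ball_lt_top.ne
  have hd : (0 : ℝ) < finrank ℝ E := by exact_mod_cast finrank_pos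
  unfold isoperimetricConst
  positivity

lemma ofReal_isoperimetricConst :
    ENNReal.ofReal (isoperimetricConst μ)
      = finrank ℝ E * μ (ball (0 : E) 1) ^ (finrank ℝ E : ℝ)⁻¹ := by
  rw [isoperimetricConst, ENNReal.ofReal_mul (Nat.cast_nonneg _), ENNReal.ofReal_natCast,
    ← ENNReal.ofReal_rpow_of_nonneg ENNReal.toReal_nonneg (by positivity),
    ENNReal.ofReal_toReal measure_ball_lt_top.ne]

theorem measure_add_isoperimetricConst_mul_le_measure_thickening [BorelSpace E]
    [Nontrivial E] {A : Set E} (hA : MeasurableSet A) (hA₀ : A.Nonempty) {ε : ℝ} (hε : 0 < ε) :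
    μ A + ENNReal.ofReal ε * (ENNReal.ofReal (isoperimetricConst μ)
      * μ A ^ (((finrank ℝ E : ℝ) - 1) / finrank ℝ E)) ≤ μ (thickening ε A) := by
  set d := finrank ℝ E
  have hd₀ : 0 < d := finrank_pos
  have hroot (x : ℝ≥0∞) : (x ^ (d : ℝ)⁻¹) ^ d = x := ENNReal.rpow_inv_natCast_pow hd₀.ne' x
  have hball : μ (ball (0 : E) ε) ^ (d : ℝ)⁻¹
      = ENNReal.ofReal ε * μ (ball (0 : E) 1) ^ (d : ℝ)⁻¹ := by
    rw [Measure.addHaar_ball μ 0 hε.le, ENNReal.mul_rpow_of_nonneg _ _ (by positivity),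
      ENNReal.ofReal_rpow_of_pos (by positivity), Real.pow_rpow_inv_natCast hε.le hd₀.ne']
  have hpow : (μ A ^ (d : ℝ)⁻¹) ^ (d - 1) = μ A ^ (((d : ℝ) - 1) / d) := by
    rw [← ENNReal.rpow_natCast, ← ENNReal.rpow_mul, Nat.cast_pred hd₀, mul_comm, div_eq_mul_inv]
  calc
    μ A + ENNReal.ofReal ε * (ENNReal.ofReal (isoperimetricConst μ) * μ A ^ (((d : ℝ) - 1) / d))
      = (μ A ^ (d : ℝ)⁻¹) ^ d
          + d * (μ A ^ (d : ℝ)⁻¹) ^ (d - 1) * μ (ball (0 : E) ε) ^ (d : ℝ)⁻¹ := by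
        rw [hroot, hpow, hball, ofReal_isoperimetricConst]
        ring
    _ ≤ (μ A ^ (d : ℝ)⁻¹ + μ (ball (0 : E) ε) ^ (d : ℝ)⁻¹) ^ d :=
      pow_add_mul_le_add_pow zero_le zero_le d
    _ ≤ (μ (thickening ε A) ^ (d : ℝ)⁻¹) ^ d := by
      rw [← add_ball_zero]
      gcongr
      exact brunn_minkowski μ hA measurableSet_ball hA₀ (nonempty_ball.2 hε)
    _ = μ (thickening ε A) := hroot _

end Isoperimetric

section DistributionFunction

variable {α : Type*} [MeasurableSpace α] (μ : Measure α) (f : α → ℝ)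

/-- The distribution function of `f`, in the left-continuous convention `t ↦ μ {x | t ≤ f x}`, for
which superlevel sets of continuous functions are closed. -/
def distribFun (t : ℝ) : ℝ≥0∞ := μ {x | t ≤ f x}

variable {μ f}

lemma distribFun_antitone : Antitone (distribFun μ f) :=
  fun _ _ hst => measure_mono fun _ hx => hst.trans hx

lemma measurable_distribFun : Measurable (distribFun μ f) := distribFun_antitone.measurable

lemma distribFun_restrict_support {F : Type*} [NormedAddCommGroup F] (u : α → F) {t : ℝ}
    (ht : 0 < t) :
    distribFun (μ.restrict (Function.support u)) (‖u ·‖) t = distribFun μ (‖u ·‖) t :=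
  Measure.restrict_eq_self _ fun _ hx => norm_pos_iff.1 (ht.trans_le hx)

lemma measure_distribFun_comp_le [IsFiniteMeasure μ] (hf : Measurable f) (r : ℝ≥0∞) :
    μ {x | distribFun μ f (f x) ≤ r} ≤ r := by
  have hS : MeasurableSet {t | distribFun μ f t ≤ r} :=
    measurableSet_le measurable_distribFun measurable_const
  change μ (f ⁻¹' {t | distribFun μ f t ≤ r}) ≤ r
  rw [← Measure.map_apply hf hS, hS.measure_eq_iSup_isCompact]
  refine iSup₂_le fun K hKS => iSup_le fun hK => ?_
  rcases K.eq_empty_or_nonempty with rfl | hK₀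
  · simp
  · obtain ⟨k, hk⟩ := hK.exists_isLeast hK₀
    calc
      μ.map f K ≤ μ.map f (Ici k) := measure_mono hk.2
      _ = distribFun μ f k := Measure.map_apply hf measurableSet_Ici
      _ ≤ r := hKS hk.1

lemma measure_lt_inter_distribFun_comp_le [IsFiniteMeasure μ] (hf : Measurable f) (T : ℝ)
    (r : ℝ≥0∞) :
    μ ({x | f x < T} ∩ {x | distribFun μ f (f x) ≤ r}) ≤ min (μ univ) r - distribFun μ f T := by
  rcases le_or_gt (distribFun μ f T) r with hTr | hTr
  · have hdisj : Disjoint ({x | f x < T} ∩ {x | distribFun μ f (f x) ≤ r}) {x | T ≤ f x} :=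
      disjoint_left.2 fun x hx (hTx : T ≤ f x) => hTx.not_gt hx.1
    refine ENNReal.le_sub_of_add_le_right (measure_ne_top μ _) ?_
    rw [distribFun, ← measure_union hdisj (measurableSet_le measurable_const hf)]
    refine le_min (measure_mono (subset_univ _)) ?_
    refine (measure_mono ?_).trans (measure_distribFun_comp_le hf r)
    rintro x (hx | hx)
    · exact hx.2
    · exact (distribFun_antitone hx).trans hTr
  · have : {x | f x < T} ∩ {x | distribFun μ f (f x) ≤ r} = ∅ :=
      eq_empty_of_forall_notMem fun x hx =>
        (hTr.trans_le (distribFun_antitone hx.1.le)).not_ge hx.2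
    simp [this]

lemma lintegral_Ioo_ofReal_inv {m V : ℝ} (hm : 0 < m) (hmV : m ≤ V) :
    ∫⁻ r in Ioo m V, ENNReal.ofReal r⁻¹ = ENNReal.ofReal (Real.log (V / m)) := by
  have hcont : ContinuousOn (fun r : ℝ => r⁻¹) (uIcc m V) := by
    rw [uIcc_of_le hmV]
    exact continuousOn_inv₀.mono fun r hr => (hm.trans_le hr.1).ne'
  rw [restrict_Ioo_eq_restrict_Ioc, ← integral_inv_of_pos hm (hm.trans_le hmV),
    intervalIntegral.integral_of_le hmV, ofReal_integral_eq_lintegral_ofReal]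
  · exact (intervalIntegrable_iff_integrableOn_Ioc_of_le hmV).1 hcont.intervalIntegrable
  · exact (ae_restrict_iff' measurableSet_Ioc).2
      (ae_of_all _ fun r hr => inv_nonneg.2 (hm.trans hr.1).le)

lemma lintegral_ofReal_min_inv_sub {m V : ℝ} (hm : 0 < m) (hmV : m ≤ V) :
    ∫⁻ s in Ioi (0 : ℝ), ENNReal.ofReal (min V s⁻¹ - m) = ENNReal.ofReal (Real.log (V / m)) := by
  rw [← lintegral_Ioo_ofReal_inv hm hmV,
    lintegral_eq_lintegral_meas_ofReal_lt (μ := volume.restrict (Ioo m V)) (by fun_prop)]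
  refine setLIntegral_congr_fun measurableSet_Ioi fun s (hs : 0 < s) => ?_
  have hset : {r : ℝ | ENNReal.ofReal s < ENNReal.ofReal r⁻¹} ∩ Ioo m V = Ioo m (min V s⁻¹) := by
    ext r
    have hr : m < r → (ENNReal.ofReal s < ENNReal.ofReal r⁻¹ ↔ r < s⁻¹) := fun h => by
      rw [ENNReal.ofReal_lt_ofReal_iff (inv_pos.2 (hm.trans h)), lt_inv_comm₀ hs (hm.trans h)]
    simp only [mem_inter_iff, mem_ofPred_eq, mem_Ioo, lt_min_iff]
    tauto
  rw [Measure.restrict_apply (measurableSet_lt (by fun_prop) (by fun_prop)), hset, Real.volume_Ioo]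

theorem lintegral_inv_distribFun_comp_le [IsFiniteMeasure μ] (hf : Measurable f) {T : ℝ}
    (hT : distribFun μ f T ≠ 0) :
    ∫⁻ x in {x | f x < T}, (distribFun μ f (f x))⁻¹ ∂μ
      ≤ ENNReal.ofReal (Real.log ((μ univ).toReal / (distribFun μ f T).toReal)) := by
  have hT_top : distribFun μ f T ≠ ⊤ := measure_ne_top μ _
  have hmeas : Measurable fun x => (distribFun μ f (f x))⁻¹ := (measurable_distribFun.comp hf).inv
  rw [lintegral_eq_lintegral_meas_ofReal_lt hmeas, ← lintegral_ofReal_min_inv_sub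
    (ENNReal.toReal_pos hT hT_top)
    (ENNReal.toReal_mono (measure_ne_top μ _) (measure_mono (subset_univ _)))]
  refine setLIntegral_mono' measurableSet_Ioi fun s (hs : 0 < s) => ?_
  calc
    μ.restrict {x | f x < T} {x | ENNReal.ofReal s < (distribFun μ f (f x))⁻¹}
      ≤ μ ({x | f x < T} ∩ {x | distribFun μ f (f x) ≤ ENNReal.ofReal s⁻¹}) := by
        rw [Measure.restrict_apply (measurableSet_lt measurable_const hmeas), inter_comm]
        refine measure_mono (inter_subset_inter_right _ fun x hx => ?_)
        rw [mem_ofPred_eq, ENNReal.ofReal_inv_of_pos hs]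
        exact (ENNReal.lt_inv_iff_lt_inv.1 hx).le
    _ ≤ min (μ univ) (ENNReal.ofReal s⁻¹) - distribFun μ f T :=
      measure_lt_inter_distribFun_comp_le hf T _
    _ = ENNReal.ofReal (min (μ univ).toReal s⁻¹ - (distribFun μ f T).toReal) := by
      rw [ENNReal.ofReal_sub _ ENNReal.toReal_nonneg, ENNReal.ofReal_toReal hT_top,
        ENNReal.ofReal_min, ENNReal.ofReal_toReal (measure_ne_top μ _)]

end DistributionFunction

section Coarea

lemma lintegral_measure_mem_Ioc_le {α : Type*} [MeasurableSpace α] {μ : Measure α} [SFinite μ]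
    {f g : α → ℝ} (hf : Measurable f) (hg : Measurable g) {U : Set ℝ} (hU : MeasurableSet U) :
    ∫⁻ t, μ {x | f x ∈ U ∧ t ∈ Ioc (f x) (f x + g x)}
      ≤ ∫⁻ x in f ⁻¹' U, ENNReal.ofReal (g x) ∂μ := by
  let S : Set (α × ℝ) := {p | f p.1 ∈ U ∧ p.2 ∈ Ioc (f p.1) (f p.1 + g p.1)}
  have hS : MeasurableSet S := by
    refine (hU.preimage (hf.comp measurable_fst)).inter ?_
    exact (measurableSet_lt (hf.comp measurable_fst) measurable_snd).inter
      (measurableSet_le measurable_snd ((hf.add hg).comp measurable_fst))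
  calc
    ∫⁻ t, μ {x | f x ∈ U ∧ t ∈ Ioc (f x) (f x + g x)} = (μ.prod volume) S :=
      (Measure.prod_apply_symm hS).symm
    _ = ∫⁻ x, volume (Prod.mk x ⁻¹' S) ∂μ := Measure.prod_apply hS
    _ ≤ ∫⁻ x, (f ⁻¹' U).indicator (fun x => ENNReal.ofReal (g x)) x ∂μ := by
      refine lintegral_mono fun x => ?_
      by_cases hx : f x ∈ U
      · rw [indicator_of_mem (mem_preimage.2 hx)]
        calc
          volume (Prod.mk x ⁻¹' S) ≤ volume (Ioc (f x) (f x + g x)) := measure_mono fun t ht => ht.2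
          _ = ENNReal.ofReal (g x) := by rw [Real.volume_Ioc, add_sub_cancel_left]
      · have : Prod.mk x ⁻¹' S = ∅ := eq_empty_of_forall_notMem fun t ht => hx ht.1
        simp [this]
    _ = ∫⁻ x in f ⁻¹' U, ENNReal.ofReal (g x) ∂μ := lintegral_indicator (hf hU) _

lemma measure_support_ne_top {X F : Type*} [TopologicalSpace X] [MeasurableSpace X] [Zero F]
    (μ : Measure X) [IsFiniteMeasureOnCompacts μ] {u : X → F} (hs : HasCompactSupport u) :
    μ (Function.support u) ≠ ⊤ :=
  ne_top_of_le_ne_top hs.isCompact.measure_ne_top (measure_mono (subset_tsupport u))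

lemma measure_norm_preimage_ne_top {X F : Type*} [TopologicalSpace X] [MeasurableSpace X]
    [NormedAddCommGroup F] (μ : Measure X) [IsFiniteMeasureOnCompacts μ] {u : X → F}
    (hs : HasCompactSupport u) {U : Set ℝ} (hU : U ⊆ Ioi 0) : μ ((‖u ·‖) ⁻¹' U) ≠ ⊤ :=
  ne_top_of_le_ne_top (measure_support_ne_top μ hs) <| measure_mono fun _ hx =>
    norm_pos_iff.1 (hU hx)

variable {E F : Type*} [NormedAddCommGroup E] [NormedSpace ℝ E] [NormedAddCommGroup F] {u : E → F}

lemma exists_forall_dist_lt_norm_le [NormedSpace ℝ F] (hu : ContDiff ℝ 1 u)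
    (hs : HasCompactSupport u) {η : ℝ} (hη : 0 < η) :
    ∃ δ > 0, ∀ ε ≤ δ, ∀ x y, dist y x < ε → ‖u y‖ ≤ ‖u x‖ + ε * (‖fderiv ℝ u x‖ + η) := by
  have huc : UniformContinuous (fderiv ℝ u) :=
    (hs.fderiv ℝ).uniformContinuous_of_continuous (hu.continuous_fderiv one_ne_zero)
  obtain ⟨δ, hδ, hδu⟩ := Metric.uniformContinuous_iff.1 huc η hη
  refine ⟨δ, hδ, fun ε hε x y hyx => ?_⟩
  have hderiv : ∀ z ∈ ball x δ, ‖fderiv ℝ u z‖ ≤ ‖fderiv ℝ u x‖ + η := fun z hz => by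
    have := norm_le_norm_add_norm_sub' (fderiv ℝ u z) (fderiv ℝ u x)
    have := hδu (mem_ball.1 hz)
    rw [dist_eq_norm] at this
    linarith
  have hmv : ‖u y - u x‖ ≤ (‖fderiv ℝ u x‖ + η) * ‖y - x‖ :=
    (convex_ball x δ).norm_image_sub_le_of_norm_fderiv_le
      (fun z _ => hu.differentiable one_ne_zero z) hderiv (mem_ball_self hδ)
      (mem_ball.2 (hyx.trans_le hε))
  calc
    ‖u y‖ ≤ ‖u x‖ + ‖u y - u x‖ := norm_le_norm_add_norm_sub' _ _
    _ ≤ ‖u x‖ + (‖fderiv ℝ u x‖ + η) * ‖y - x‖ := by gcongr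
    _ ≤ ‖u x‖ + (‖fderiv ℝ u x‖ + η) * ε := by
      gcongr
      exact (dist_eq_norm y x ▸ hyx).le
    _ = ‖u x‖ + ε * (‖fderiv ℝ u x‖ + η) := by rw [mul_comm]

variable [MeasurableSpace E] (μ : Measure E)

/-- The measure `c φ(t)^{(d-1)/d} dt` on `t > 0`, where `φ` is the distribution function of `‖u‖`
and `c` the isoperimetric constant: its density is the isoperimetric lower bound for the perimeter
of the superlevel set `{t ≤ ‖u‖}`. -/
def isoperimetricMeasure (u : E → F) : Measure ℝ :=
  (volume.restrict (Ioi 0)).withDensity fun t =>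
    ENNReal.ofReal (isoperimetricConst μ)
      * distribFun μ (‖u ·‖) t ^ (((finrank ℝ E : ℝ) - 1) / finrank ℝ E)

lemma isoperimetricMeasure_apply {K : Set ℝ} (hK : MeasurableSet K) (hK₀ : K ⊆ Ioi 0) :
    isoperimetricMeasure μ u K = ∫⁻ t in K, ENNReal.ofReal (isoperimetricConst μ)
      * distribFun μ (‖u ·‖) t ^ (((finrank ℝ E : ℝ) - 1) / finrank ℝ E) := by
  rw [isoperimetricMeasure, withDensity_apply _ hK, Measure.restrict_restrict hK,
    inter_eq_left.2 hK₀]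

lemma sigmaFinite_isoperimetricMeasure [IsFiniteMeasureOnCompacts μ] (hd : 1 < finrank ℝ E)
    (hs : HasCompactSupport u) :
    SigmaFinite (isoperimetricMeasure μ u) := by
  have hκ : 0 ≤ ((finrank ℝ E : ℝ) - 1) / finrank ℝ E :=
    div_nonneg (sub_nonneg.2 (by exact_mod_cast hd.le)) (Nat.cast_nonneg _)
  refine SigmaFinite.withDensity_of_ne_top ?_
  refine (ae_restrict_iff' measurableSet_Ioi).2 (ae_of_all _ fun t (ht : 0 < t) => ?_)
  exact ENNReal.mul_ne_top ENNReal.ofReal_ne_top <|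
    ENNReal.rpow_ne_top_of_nonneg hκ (measure_norm_preimage_ne_top μ hs (Ici_subset_Ioi.2 ht))

lemma ofReal_mul_isoperimetricConst_mul_distribFun_le [BorelSpace E] [FiniteDimensional ℝ E]
    [μ.IsAddHaarMeasure] (hd : 1 < finrank ℝ E) (hu : Continuous u) (hs : HasCompactSupport u)
    {g : E → ℝ} {ε t : ℝ} {U : Set ℝ} (hε : 0 < ε) (ht : 0 < t)
    (hball : ∀ x y, dist y x < ε → ‖u y‖ ≤ ‖u x‖ + g x)
    (hU : ∀ x y, dist y x < ε → ‖u x‖ < t → t ≤ ‖u y‖ → ‖u x‖ ∈ U) :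
    ENNReal.ofReal ε * (ENNReal.ofReal (isoperimetricConst μ)
        * distribFun μ (‖u ·‖) t ^ (((finrank ℝ E : ℝ) - 1) / finrank ℝ E))
      ≤ μ {x | ‖u x‖ ∈ U ∧ t ∈ Ioc ‖u x‖ (‖u x‖ + g x)} := by
  have hκ : 0 < ((finrank ℝ E : ℝ) - 1) / finrank ℝ E :=
    div_pos (sub_pos.2 (by exact_mod_cast hd)) (by exact_mod_cast one_pos.trans hd)
  have : Nontrivial E := nontrivial_of_finrank_pos (one_pos.trans hd)
  rcases eq_empty_or_nonempty {x | t ≤ ‖u x‖} with hA | hA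
  · simp [distribFun, hA, ENNReal.zero_rpow_of_pos hκ]
  have hA_top : distribFun μ (‖u ·‖) t ≠ ⊤ :=
    measure_norm_preimage_ne_top μ hs (Ici_subset_Ioi.2 ht)
  have hsubset : thickening ε {x | t ≤ ‖u x‖}
      ⊆ {x | t ≤ ‖u x‖} ∪ {x | ‖u x‖ ∈ U ∧ t ∈ Ioc ‖u x‖ (‖u x‖ + g x)} := fun x hx => by
    obtain ⟨y, hty, hxy⟩ := mem_thickening_iff.1 hx
    rw [dist_comm] at hxy
    rcases le_or_gt t ‖u x‖ with htx | hxt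
    · exact Or.inl htx
    · exact Or.inr ⟨hU x y hxy hxt hty, hxt, le_trans hty (hball x y hxy)⟩
  rw [← ENNReal.add_le_add_iff_left hA_top]
  calc
    _ ≤ μ (thickening ε {x | t ≤ ‖u x‖}) :=
      measure_add_isoperimetricConst_mul_le_measure_thickening μ
        (measurableSet_le measurable_const hu.norm.measurable) hA hε
    _ ≤ _ := (measure_mono hsubset).trans (measure_union_le _ _)

variable [NormedSpace ℝ F]

/-- The distribution of the total variation of `u` among the values of `‖u‖`: the push-forward of
`‖Du‖ dμ` under `‖u‖`. -/
def variationMeasure (u : E → F) : Measure ℝ :=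
  (μ.withDensity fun x => ‖fderiv ℝ u x‖ₑ).map (‖u ·‖)

variable [BorelSpace E]

lemma isFiniteMeasure_variationMeasure [IsFiniteMeasureOnCompacts μ] (hu : ContDiff ℝ 1 u)
    (hs : HasCompactSupport u) : IsFiniteMeasure (variationMeasure μ u) := by
  have hint : Integrable (fderiv ℝ u) μ :=
    (hu.continuous_fderiv one_ne_zero).integrable_of_hasCompactSupport (hs.fderiv ℝ)
  have := isFiniteMeasure_withDensity hint.2.ne
  unfold variationMeasure
  infer_instance

lemma variationMeasure_apply (hu : Continuous u) {U : Set ℝ} (hU : MeasurableSet U) :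
    variationMeasure μ u U = ∫⁻ x in (‖u ·‖) ⁻¹' U, ‖fderiv ℝ u x‖ₑ ∂μ := by
  rw [variationMeasure, Measure.map_apply hu.norm.measurable hU,
    withDensity_apply _ (hu.norm.measurable hU)]

variable [FiniteDimensional ℝ E] [μ.IsAddHaarMeasure]

lemma exists_forall_ofReal_mul_isoperimetricConst_mul_distribFun_le (hd : 1 < finrank ℝ E)
    (hu : ContDiff ℝ 1 u) (hs : HasCompactSupport u) {K U : Set ℝ} (hK : IsCompact K)
    (hU : IsOpen U) (hKU : K ⊆ U) (hK₀ : K ⊆ Ioi 0) {η : ℝ} (hη : 0 < η) :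
    ∃ ε > 0, ∀ t ∈ K,
      ENNReal.ofReal ε * (ENNReal.ofReal (isoperimetricConst μ)
          * distribFun μ (‖u ·‖) t ^ (((finrank ℝ E : ℝ) - 1) / finrank ℝ E))
        ≤ μ {x | ‖u x‖ ∈ U ∧ t ∈ Ioc ‖u x‖ (‖u x‖ + ε * (‖fderiv ℝ u x‖ + η))} := by
  obtain ⟨δ, hδ, hδU⟩ := hK.exists_thickening_subset_open hU hKU
  obtain ⟨ε₁, hε₁, hmv⟩ := exists_forall_dist_lt_norm_le hu hs hη
  obtain ⟨ε₂, hε₂, hosc⟩ := Metric.uniformContinuous_iff.1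
    (hs.uniformContinuous_of_continuous hu.continuous) δ hδ
  have hε : 0 < min ε₁ ε₂ := lt_min hε₁ hε₂
  refine ⟨min ε₁ ε₂, hε, fun t ht => ?_⟩
  refine ofReal_mul_isoperimetricConst_mul_distribFun_le μ hd hu.continuous hs hε (hK₀ ht)
    (hmv _ (min_le_left _ _)) fun x y hyx hxt hty => hδU (mem_thickening_iff.2 ⟨t, ht, ?_⟩)
  have hxy : ‖u y‖ - ‖u x‖ < δ :=
    (norm_sub_norm_le _ _).trans_lt (dist_eq_norm (u y) (u x) ▸ hosc (lt_min_iff.1 hyx).2)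
  rw [Real.dist_eq, abs_of_neg] <;> linarith

lemma isoperimetricMeasure_le_variationMeasure_add (hd : 1 < finrank ℝ E) (hu : ContDiff ℝ 1 u)
    (hs : HasCompactSupport u) {K U : Set ℝ} (hK : IsCompact K) (hU : IsOpen U) (hKU : K ⊆ U)
    (hU₀ : U ⊆ Ioi 0) {η : ℝ} (hη : 0 < η) :
    isoperimetricMeasure μ u K
      ≤ variationMeasure μ u U + ENNReal.ofReal η * μ ((‖u ·‖) ⁻¹' U) := by
  have : Continuous (fderiv ℝ u) := hu.continuous_fderiv one_ne_zero
  obtain ⟨ε, hε, hslice⟩ := exists_forall_ofReal_mul_isoperimetricConst_mul_distribFun_le μ hd hu hs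
    hK hU hKU (hKU.trans hU₀) hη
  have hε₀ : ENNReal.ofReal ε ≠ 0 := by simpa using hε
  rw [← ENNReal.mul_le_mul_iff_right hε₀ ENNReal.ofReal_ne_top,
    isoperimetricMeasure_apply μ hK.measurableSet (hKU.trans hU₀),
    variationMeasure_apply μ hu.continuous hU.measurableSet,
    ← setLIntegral_const, ← lintegral_add_right _ measurable_const,
    ← lintegral_const_mul _ ((measurable_distribFun.pow_const _).const_mul _)]
  calc
    _ ≤ ∫⁻ t in K, μ {x | ‖u x‖ ∈ U ∧ t ∈ Ioc ‖u x‖ (‖u x‖ + ε * (‖fderiv ℝ u x‖ + η))} :=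
      setLIntegral_mono' hK.measurableSet hslice
    _ ≤ ∫⁻ t, μ {x | ‖u x‖ ∈ U ∧ t ∈ Ioc ‖u x‖ (‖u x‖ + ε * (‖fderiv ℝ u x‖ + η))} :=
      setLIntegral_le_lintegral _ _
    _ ≤ ∫⁻ x in (‖u ·‖) ⁻¹' U, ENNReal.ofReal (ε * (‖fderiv ℝ u x‖ + η)) ∂μ :=
      lintegral_measure_mem_Ioc_le hu.continuous.norm.measurable (by fun_prop) hU.measurableSet
    _ = ENNReal.ofReal ε * ∫⁻ x in (‖u ·‖) ⁻¹' U, (‖fderiv ℝ u x‖ₑ + ENNReal.ofReal η) ∂μ := by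
      rw [← lintegral_const_mul _ (by fun_prop)]
      simp only [ENNReal.ofReal_mul hε.le, ENNReal.ofReal_add (norm_nonneg _) hη.le,
        ofReal_norm]

lemma isoperimetricMeasure_le_variationMeasure_of_isCompact (hd : 1 < finrank ℝ E)
    (hu : ContDiff ℝ 1 u) (hs : HasCompactSupport u) {K U : Set ℝ} (hK : IsCompact K)
    (hU : IsOpen U) (hKU : K ⊆ U) (hU₀ : U ⊆ Ioi 0) :
    isoperimetricMeasure μ u K ≤ variationMeasure μ u U := by
  have hlim : Tendsto (fun η => variationMeasure μ u U + ENNReal.ofReal η * μ ((‖u ·‖) ⁻¹' U))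
      (𝓝[>] 0) (𝓝 (variationMeasure μ u U + ENNReal.ofReal 0 * μ ((‖u ·‖) ⁻¹' U))) :=
    ((ENNReal.Tendsto.mul_const (ENNReal.continuous_ofReal.tendsto 0)
      (Or.inr (measure_norm_preimage_ne_top μ hs hU₀))).const_add _).mono_left nhdsWithin_le_nhds
  rw [ENNReal.ofReal_zero, zero_mul, add_zero] at hlim
  exact ge_of_tendsto hlim <| eventually_mem_nhdsWithin.mono fun η hη =>
    isoperimetricMeasure_le_variationMeasure_add μ hd hu hs hK hU hKU hU₀ hη

theorem isoperimetricMeasure_le_variationMeasure (hd : 1 < finrank ℝ E) (hu : ContDiff ℝ 1 u)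
    (hs : HasCompactSupport u) : isoperimetricMeasure μ u ≤ variationMeasure μ u := by
  have := isFiniteMeasure_variationMeasure μ hu hs
  have := sigmaFinite_isoperimetricMeasure μ hd hs
  have hIoi : isoperimetricMeasure μ u (Ioi 0)ᶜ = 0 :=
    withDensity_absolutelyContinuous _ _ (by
      rw [Measure.restrict_apply measurableSet_Ioi.compl, compl_inter_self, measure_empty])
  refine Measure.le_intro fun S hS _ => ?_
  rw [← measure_inter_add_sdiff S (measurableSet_Ioi (a := (0 : ℝ))), sdiff_eq,
    measure_mono_null inter_subset_right hIoi, add_zero,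
    (hS.inter measurableSet_Ioi).measure_eq_iSup_isCompact]
  refine iSup₂_le fun K hKS => iSup_le fun hK => ?_
  calc
    isoperimetricMeasure μ u K ≤ variationMeasure μ u K := by
      rw [K.measure_eq_iInf_isOpen (variationMeasure μ u)]
      refine le_iInf₂ fun U hKU => le_iInf fun hU => ?_
      exact (isoperimetricMeasure_le_variationMeasure_of_isCompact μ hd hu hs hK
        (hU.inter isOpen_Ioi) (subset_inter hKU (hKS.trans inter_subset_right))
        inter_subset_right).trans (measure_mono inter_subset_left)
    _ ≤ variationMeasure μ u S := measure_mono (hKS.trans inter_subset_left)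

theorem setLIntegral_isoperimetricConst_mul_le (hd : 1 < finrank ℝ E) (hu : ContDiff ℝ 1 u)
    (hs : HasCompactSupport u) {S : Set ℝ} (hS : MeasurableSet S) (hS₀ : S ⊆ Ioi 0)
    {ψ : ℝ → ℝ≥0∞} (hψ : Measurable ψ) :
    ∫⁻ t in S, ENNReal.ofReal (isoperimetricConst μ)
        * distribFun μ (‖u ·‖) t ^ (((finrank ℝ E : ℝ) - 1) / finrank ℝ E) * ψ t
      ≤ ∫⁻ x in (‖u ·‖) ⁻¹' S, ‖fderiv ℝ u x‖ₑ * ψ ‖u x‖ ∂μ := by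
  have hDu : Measurable fun x => ‖fderiv ℝ u x‖ₑ :=
    (hu.continuous_fderiv one_ne_zero).enorm.measurable
  have hnorm : Measurable fun x => ‖u x‖ := hu.continuous.norm.measurable
  calc
    _ = ∫⁻ t in S, ψ t ∂isoperimetricMeasure μ u := by
      rw [isoperimetricMeasure, setLIntegral_withDensity_eq_setLIntegral_mul _
        ((measurable_distribFun.pow_const _).const_mul _) hψ hS, Measure.restrict_restrict hS,
        inter_eq_left.2 hS₀]
      rfl
    _ ≤ ∫⁻ t in S, ψ t ∂variationMeasure μ u :=
      lintegral_mono' (Measure.restrict_mono le_rfl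
        (isoperimetricMeasure_le_variationMeasure μ hd hu hs)) le_rfl
    _ = ∫⁻ x in (‖u ·‖) ⁻¹' S, ‖fderiv ℝ u x‖ₑ * ψ ‖u x‖ ∂μ := by
      rw [variationMeasure, setLIntegral_map hS hψ hnorm,
        setLIntegral_withDensity_eq_setLIntegral_mul (g := fun x => ψ ‖u x‖) _ hDu
          (hψ.comp hnorm) (hnorm hS)]
      rfl

end Coarea

section Decay

variable {E F : Type*} [NormedAddCommGroup E] [NormedSpace ℝ E] [FiniteDimensional ℝ E]
  [MeasurableSpace E] [BorelSpace E] [NormedAddCommGroup F] [NormedSpace ℝ F]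
  (μ : Measure E) [μ.IsAddHaarMeasure] {u : E → F} {T : ℝ}

lemma ofReal_isoperimetricConst_mul_ofReal_le_lintegral (hd : 1 < finrank ℝ E)
    (hu : ContDiff ℝ 1 u) (hs : HasCompactSupport u) (hT : distribFun μ (‖u ·‖) T ≠ 0) :
    ENNReal.ofReal (isoperimetricConst μ) * ENNReal.ofReal T
      ≤ ∫⁻ x in {x | ‖u x‖ < T}, ‖fderiv ℝ u x‖ₑ
          * (distribFun (μ.restrict (Function.support u)) (‖u ·‖) ‖u x‖
              ^ (((finrank ℝ E : ℝ) - 1) / finrank ℝ E))⁻¹ ∂μ.restrict (Function.support u) := by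
  set κ := ((finrank ℝ E : ℝ) - 1) / finrank ℝ E
  have hκ : 0 ≤ κ := div_nonneg (sub_nonneg.2 (by exact_mod_cast hd.le)) (Nat.cast_nonneg _)
  set φ := distribFun (μ.restrict (Function.support u)) (‖u ·‖)
  have hset : MeasurableSet {x | ‖u x‖ < T} :=
    measurableSet_lt hu.continuous.norm.measurable measurable_const
  have hpreimage : (‖u ·‖) ⁻¹' Ioo 0 T = {x | ‖u x‖ < T} ∩ Function.support u := by
    ext x
    simp [and_comm]
  have hcancel : ∀ t ∈ Ioo 0 T, ENNReal.ofReal (isoperimetricConst μ)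
      = ENNReal.ofReal (isoperimetricConst μ) * distribFun μ (‖u ·‖) t ^ κ * (φ t ^ κ)⁻¹ :=
    fun t ht => by
    have h₀ : distribFun μ (‖u ·‖) t ≠ 0 := ne_bot_of_le_ne_bot hT (distribFun_antitone ht.2.le)
    have h_top : distribFun μ (‖u ·‖) t ≠ ⊤ :=
      measure_norm_preimage_ne_top μ hs (Ici_subset_Ioi.2 ht.1)
    have hφ : φ t = distribFun μ (‖u ·‖) t := distribFun_restrict_support u ht.1
    rw [hφ, mul_assoc, ENNReal.mul_inv_cancel
      (by simp [ENNReal.rpow_eq_zero_iff, h₀, h_top])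
      (ENNReal.rpow_ne_top_of_nonneg hκ h_top), mul_one]
  calc
    _ = ∫⁻ _ in Ioo 0 T, ENNReal.ofReal (isoperimetricConst μ) := by
      rw [setLIntegral_const, Real.volume_Ioo, sub_zero]
    _ = ∫⁻ t in Ioo 0 T, ENNReal.ofReal (isoperimetricConst μ)
          * distribFun μ (‖u ·‖) t ^ κ * (φ t ^ κ)⁻¹ :=
      setLIntegral_congr_fun measurableSet_Ioo hcancel
    _ ≤ ∫⁻ x in (‖u ·‖) ⁻¹' Ioo 0 T, ‖fderiv ℝ u x‖ₑ * (φ ‖u x‖ ^ κ)⁻¹ ∂μ :=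
      setLIntegral_isoperimetricConst_mul_le μ hd hu hs measurableSet_Ioo Ioo_subset_Ioi_self
        (measurable_distribFun.pow_const κ).inv
    _ = _ := by rw [hpreimage, Measure.restrict_restrict hset]

lemma ofReal_isoperimetricConst_mul_ofReal_le_mul_log (hd : 1 < finrank ℝ E)
    (hu : ContDiff ℝ 1 u) (hs : HasCompactSupport u) (hT₀ : 0 < T)
    (hT : distribFun μ (‖u ·‖) T ≠ 0) :
    ENNReal.ofReal (isoperimetricConst μ) * ENNReal.ofReal T
      ≤ (∫⁻ x in Function.support u, ‖fderiv ℝ u x‖ₑ ^ (finrank ℝ E : ℝ) ∂μ)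
            ^ (1 / (finrank ℝ E : ℝ))
          * ENNReal.ofReal (Real.log ((μ (Function.support u)).toReal
              / (distribFun μ (‖u ·‖) T).toReal)) ^ (((finrank ℝ E : ℝ) - 1) / finrank ℝ E) := by
  have hd₁ : 1 < (finrank ℝ E : ℝ) := Nat.one_lt_cast.2 hd
  set d := (finrank ℝ E : ℝ)
  have hconj : d.HolderConjugate (d / (d - 1)) := .conjExponent hd₁
  have hκ : (d - 1) / d * (d / (d - 1)) = 1 :=
    div_mul_div_cancel₀ (by linarith) |>.trans (div_self (by linarith))
  set ν := μ.restrict (Function.support u)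
  have : IsFiniteMeasure ν := isFiniteMeasure_restrict.2 (measure_support_ne_top μ hs)
  have hφ : Measurable fun x => distribFun ν (‖u ·‖) ‖u x‖ :=
    measurable_distribFun.comp hu.continuous.norm.measurable
  have hDu : Measurable fun x => ‖fderiv ℝ u x‖ₑ :=
    (hu.continuous_fderiv one_ne_zero).enorm.measurable
  have hTν : distribFun ν (‖u ·‖) T = distribFun μ (‖u ·‖) T := distribFun_restrict_support u hT₀
  calc
    _ ≤ ∫⁻ x in {x | ‖u x‖ < T}, ‖fderiv ℝ u x‖ₑ
          * (distribFun ν (‖u ·‖) ‖u x‖ ^ ((d - 1) / d))⁻¹ ∂ν :=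
      ofReal_isoperimetricConst_mul_ofReal_le_lintegral μ hd hu hs hT
    _ ≤ (∫⁻ x in {x | ‖u x‖ < T}, ‖fderiv ℝ u x‖ₑ ^ d ∂ν) ^ (1 / d)
          * (∫⁻ x in {x | ‖u x‖ < T}, ((distribFun ν (‖u ·‖) ‖u x‖ ^ ((d - 1) / d))⁻¹)
              ^ (d / (d - 1)) ∂ν) ^ (1 / (d / (d - 1))) :=
      ENNReal.lintegral_mul_le_Lp_mul_Lq _ hconj hDu.aemeasurable
        (hφ.pow_const _).inv.aemeasurable
    _ = (∫⁻ x in {x | ‖u x‖ < T}, ‖fderiv ℝ u x‖ₑ ^ d ∂ν) ^ (1 / d)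
          * (∫⁻ x in {x | ‖u x‖ < T}, (distribFun ν (‖u ·‖) ‖u x‖)⁻¹ ∂ν) ^ ((d - 1) / d) := by
      simp only [ENNReal.inv_rpow, ← ENNReal.rpow_mul, hκ, ENNReal.rpow_one, one_div_div]
    _ ≤ _ := by
      gcongr ?_ ^ (1 / d) * ?_ ^ ((d - 1) / d)
      · exact setLIntegral_le_lintegral _ _
      · have hlog := lintegral_inv_distribFun_comp_le (μ := ν) hu.continuous.norm.measurable
          (hTν ▸ hT)
        rwa [hTν, Measure.restrict_apply_univ] at hlog

theorem distribFun_norm_le_mul_exp (hd : 1 < finrank ℝ E) (hu : ContDiff ℝ 1 u)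
    (hs : HasCompactSupport u) {a : ℝ} (ha : 0 < a)
    (hDu : (∫⁻ x in Function.support u, ‖fderiv ℝ u x‖ₑ ^ (finrank ℝ E : ℝ) ∂μ)
      ^ (1 / (finrank ℝ E : ℝ)) ≤ ENNReal.ofReal (isoperimetricConst μ * a)) (hT : 0 < T) :
    distribFun μ (‖u ·‖) T ≤ ENNReal.ofReal ((μ (Function.support u)).toReal
      * Real.exp (-(T / a) ^ ((finrank ℝ E : ℝ) / ((finrank ℝ E : ℝ) - 1)))) := by
  have hd₁ : 0 < (finrank ℝ E : ℝ) - 1 := sub_pos.2 (Nat.one_lt_cast.2 hd)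
  set d := (finrank ℝ E : ℝ)
  have : 0 < d / (d - 1) := div_pos (by linarith) hd₁
  have : Nontrivial E := nontrivial_of_finrank_pos (one_pos.trans hd)
  have hc := isoperimetricConst_pos μ
  rcases eq_or_ne (distribFun μ (‖u ·‖) T) 0 with h₀ | h₀
  · simp [h₀]
  have h_top : distribFun μ (‖u ·‖) T ≠ ⊤ :=
    measure_norm_preimage_ne_top μ hs (Ici_subset_Ioi.2 hT)
  set m := (distribFun μ (‖u ·‖) T).toReal with hm
  set V := (μ (Function.support u)).toReal
  have hm₀ : 0 < m := ENNReal.toReal_pos h₀ h_top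
  have hmV : m ≤ V := ENNReal.toReal_mono (measure_support_ne_top μ hs) <|
    measure_mono fun x (hx : T ≤ ‖u x‖) => norm_pos_iff.1 (hT.trans_le hx)
  have hlog : 0 ≤ Real.log (V / m) := Real.log_nonneg ((one_le_div hm₀).2 hmV)
  have hκ : ((d - 1) / d) = (d / (d - 1))⁻¹ := (inv_div _ _).symm
  have key : isoperimetricConst μ * T
      ≤ isoperimetricConst μ * a * Real.log (V / m) ^ (d / (d - 1))⁻¹ := by
    rw [← ENNReal.ofReal_le_ofReal_iff (by positivity), ENNReal.ofReal_mul hc.le,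
      ENNReal.ofReal_mul (by positivity), ← ENNReal.ofReal_rpow_of_nonneg hlog (by positivity),
      ← hκ]
    exact (ofReal_isoperimetricConst_mul_ofReal_le_mul_log μ hd hu hs hT h₀).trans
      (mul_le_mul_left hDu _)
  have hpow : (T / a) ^ (d / (d - 1)) ≤ Real.log (V / m) := by
    rw [← Real.le_rpow_inv_iff_of_pos (by positivity) hlog (by positivity), div_le_iff₀' ha]
    rwa [mul_assoc, mul_le_mul_iff_right₀ hc] at key
  rw [← ENNReal.ofReal_toReal h_top, ← hm]
  refine ENNReal.ofReal_le_ofReal ?_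
  have hexp := Real.exp_le_exp.2 hpow
  rw [Real.exp_log (div_pos (hm₀.trans_le hmV) hm₀), le_div_iff₀ hm₀] at hexp
  rwa [Real.exp_neg, ← div_eq_mul_inv, le_div_iff₀ (Real.exp_pos _), mul_comm]

end Decay

section ExponentialIntegrability

lemma lintegral_Ioi_ofReal_mul_one_add_rpow_le_one {V : ℝ} (hV : 0 ≤ V) :
    ∫⁻ s in Ioi (0 : ℝ), ENNReal.ofReal (V * (1 + s) ^ (-V - 1)) ≤ 1 := by
  rcases hV.eq_or_lt with rfl | hV
  · simp
  have hderiv : ∀ s ∈ Ici (0 : ℝ),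
      HasDerivAt (fun s : ℝ => -(1 + s) ^ (-V)) (V * (1 + s) ^ (-V - 1)) s := fun s hs => by
    have hs₀ : (0 : ℝ) ≤ s := hs
    have hadd : HasDerivAt (fun s : ℝ => 1 + s) 1 s := (hasDerivAt_id s).const_add 1
    exact (hadd.rpow_const (p := -V) (Or.inl (by positivity))).neg.congr_deriv (by ring)
  have hnonneg : ∀ s ∈ Ioi (0 : ℝ), 0 ≤ V * (1 + s) ^ (-V - 1) := fun s hs => by
    have hs₀ : (0 : ℝ) < s := hs
    positivity
  have hlim : Tendsto (fun s : ℝ => -(1 + s) ^ (-V)) atTop (𝓝 0) := by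
    simpa using ((tendsto_rpow_neg_atTop hV).comp
      (tendsto_atTop_add_const_left atTop (1 : ℝ) tendsto_id)).neg
  rw [← ofReal_integral_eq_lintegral_ofReal
      (integrableOn_Ioi_deriv_of_nonneg' hderiv hnonneg hlim)
      (ae_restrict_of_forall_mem measurableSet_Ioi hnonneg),
    integral_Ioi_of_hasDerivAt_of_nonneg' hderiv hnonneg hlim]
  simp

theorem integral_exp_rpow_sub_one_le_one {α : Type*} [MeasurableSpace α] {μ : Measure α}
    {f : α → ℝ} (hf : AEMeasurable f μ) (hf₀ : 0 ≤ f) {V a r : ℝ} (hV : 0 ≤ V) (ha : 0 < a)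
    (hr : 0 < r)
    (hdecay : ∀ T > 0, distribFun μ f T ≤ ENNReal.ofReal (V * Real.exp (-(T / a) ^ r))) :
    ∫ x, (Real.exp ((f x / ((V + 1) ^ r⁻¹ * a)) ^ r) - 1) ∂μ ≤ 1 := by
  set b := (V + 1) ^ r⁻¹ * a with hb
  have hb₀ : 0 < b := by positivity
  have hdiv : ∀ x, 0 ≤ f x / b := fun x => div_nonneg (hf₀ x) hb₀.le
  have hnonneg : ∀ x, 0 ≤ Real.exp ((f x / b) ^ r) - 1 := fun x =>
    sub_nonneg.2 (Real.one_le_exp (Real.rpow_nonneg (hdiv x) r))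
  have hmeas : AEMeasurable (fun x => Real.exp ((f x / b) ^ r) - 1) μ :=
    (((hf.div_const b).pow_const r).exp).sub_const 1
  have hlevel : ∀ s ∈ Ioi (0 : ℝ), μ {x | s ≤ Real.exp ((f x / b) ^ r) - 1}
      ≤ ENNReal.ofReal (V * (1 + s) ^ (-V - 1)) := fun s hs => by
    have hs₁ : 1 < 1 + s := lt_add_of_pos_right 1 hs
    have hlog : 0 < Real.log (1 + s) := Real.log_pos hs₁
    set T := b * Real.log (1 + s) ^ r⁻¹ with hT
    have hset : {x | s ≤ Real.exp ((f x / b) ^ r) - 1} = {x | T ≤ f x} := by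
      ext x
      simp only [mem_ofPred_eq]
      rw [le_sub_iff_add_le', ← Real.log_le_iff_le_exp (by linarith),
        ← Real.rpow_inv_le_iff_of_pos hlog.le (hdiv x) hr, le_div_iff₀' hb₀]
    have hTa : (T / a) ^ r = (V + 1) * Real.log (1 + s) := by
      rw [hT, hb, mul_right_comm, mul_div_cancel_right₀ _ ha.ne',
        ← Real.mul_rpow (by positivity) hlog.le, Real.rpow_inv_rpow (by positivity) hr.ne']
    calc
      _ = distribFun μ f T := congrArg μ hset
      _ ≤ ENNReal.ofReal (V * Real.exp (-(T / a) ^ r)) := hdecay T (by positivity)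
      _ = _ := by
        rw [hTa, Real.rpow_def_of_pos (by linarith)]
        ring_nf
  rw [integral_eq_lintegral_of_nonneg_ae (ae_of_all _ hnonneg) hmeas.aestronglyMeasurable]
  refine ENNReal.toReal_le_of_le_ofReal zero_le_one ?_
  rw [ENNReal.ofReal_one, lintegral_eq_lintegral_meas_le _ (ae_of_all _ hnonneg) hmeas]
  exact (setLIntegral_mono' measurableSet_Ioi hlevel).trans
    (lintegral_Ioi_ofReal_mul_one_add_rpow_le_one hV)

end ExponentialIntegrability

section LuxemburgNorm

variable {E F : Type*} [MeasurableSpace E] [NormedAddCommGroup F]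

/-- The Luxemburg norm of `u` for the Young function `t ↦ exp (t ^ r) - 1`, on the measure space
`(E, μ)`. As an infimum of real numbers it is `0` when no `lam` is admissible. -/
def luxemburgExpNorm (μ : Measure E) (r : ℝ) (u : E → F) : ℝ :=
  sInf {lam : ℝ | 0 < lam ∧ ∫ x, (Real.exp ((‖u x‖ / lam) ^ r) - 1) ∂μ ≤ 1}

lemma luxemburgExpNorm_le {μ : Measure E} {r lam : ℝ} {u : E → F} (hlam : 0 < lam)
    (h : ∫ x, (Real.exp ((‖u x‖ / lam) ^ r) - 1) ∂μ ≤ 1) : luxemburgExpNorm μ r u ≤ lam :=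
  csInf_le ⟨0, fun _ h => h.1.le⟩ ⟨hlam, h⟩

lemma expNorm_eq_luxemburgExpNorm (n : ℕ) (s : ℝ) (Ω : Set (Euc n)) (v : Euc n → ℝ) :
    expNorm n s Ω v = luxemburgExpNorm (volume.restrict Ω) (s / ((n : ℝ) - 1)) v := by
  refine congrArg sInf (Set.ext fun lam => and_congr_right fun hlam => ?_)
  simp only [abs_div, abs_of_pos hlam, Real.norm_eq_abs]

theorem luxemburgExpNorm_restrict_le {E F : Type*} [NormedAddCommGroup E] [NormedSpace ℝ E]
    [FiniteDimensional ℝ E] [MeasurableSpace E] [BorelSpace E] [NormedAddCommGroup F]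
    [NormedSpace ℝ F] (μ : Measure E) [μ.IsAddHaarMeasure] (hd : 1 < finrank ℝ E) {Ω : Set E}
    (hΩ : μ Ω ≠ ⊤) {u : E → F} (hu : ContDiff ℝ 1 u) (hs : HasCompactSupport u)
    (hsub : Function.support u ⊆ Ω) {a : ℝ} (ha : 0 < a)
    (hDu : (∫⁻ x in Ω, ‖fderiv ℝ u x‖ₑ ^ (finrank ℝ E : ℝ) ∂μ) ^ (1 / (finrank ℝ E : ℝ))
      ≤ ENNReal.ofReal (isoperimetricConst μ * a)) :
    luxemburgExpNorm (μ.restrict Ω) ((finrank ℝ E : ℝ) / ((finrank ℝ E : ℝ) - 1)) u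
      ≤ ((μ Ω).toReal + 1) ^ (((finrank ℝ E : ℝ) - 1) / finrank ℝ E) * a := by
  have hd₁ : 0 < (finrank ℝ E : ℝ) - 1 := sub_pos.2 (Nat.one_lt_cast.2 hd)
  have hr : 0 < (finrank ℝ E : ℝ) / ((finrank ℝ E : ℝ) - 1) := div_pos (by linarith) hd₁
  have hDu_supp := (ENNReal.rpow_le_rpow (lintegral_mono_set hsub) (by positivity)).trans hDu
  have hdecay : ∀ T > 0, distribFun (μ.restrict Ω) (‖u ·‖) T ≤ ENNReal.ofReal ((μ Ω).toReal
      * Real.exp (-(T / a) ^ ((finrank ℝ E : ℝ) / ((finrank ℝ E : ℝ) - 1)))) := fun T hT =>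
    ((Measure.restrict_apply_le _ _).trans
      (distribFun_norm_le_mul_exp μ hd hu hs ha hDu_supp hT)).trans (by gcongr)
  rw [← inv_div (finrank ℝ E : ℝ)]
  exact luxemburgExpNorm_le (by positivity) (integral_exp_rpow_sub_one_le_one
    hu.continuous.norm.measurable.aemeasurable (fun x => norm_nonneg (u x))
    ENNReal.toReal_nonneg ha hr hdecay)

end LuxemburgNorm

section GradientNorm

lemma lintegral_enorm_rpow_rpow_eq_ofReal {X F : Type*} [TopologicalSpace X]
    [MeasurableSpace X] [OpensMeasurableSpace X] [NormedAddCommGroup F] {μ : Measure X}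
    [IsFiniteMeasureOnCompacts μ] {f : X → F} (hf : Continuous f) (hs : HasCompactSupport f)
    {p : ℝ} (hp : 0 < p) :
    (∫⁻ x, ‖f x‖ₑ ^ p ∂μ) ^ (1 / p) = ENNReal.ofReal ((∫ x, ‖f x‖ ^ p ∂μ) ^ (1 / p)) := by
  have hp₀ : ENNReal.ofReal p ≠ 0 := (ENNReal.ofReal_pos.2 hp).ne'
  have hLp : MemLp f (ENNReal.ofReal p) μ := hf.memLp_of_hasCompactSupport hs
  have h := hLp.eLpNorm_eq_integral_rpow_norm hp₀ ENNReal.ofReal_ne_top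
  rwa [eLpNorm_eq_lintegral_rpow_enorm_toReal hp₀ ENNReal.ofReal_ne_top,
    ENNReal.toReal_ofReal hp.le, ← one_div] at h

lemma isoperimetricConst_volume_euclideanSpace {n : ℕ} (hn : n ≠ 0) :
    isoperimetricConst (volume : Measure (Euc n))
      = (sigmaSurf n * (n : ℝ) ^ ((n : ℝ) - 1)) ^ (1 / (n : ℝ)) := by
  have hn₀ : (n : ℝ) ≠ 0 := Nat.cast_ne_zero.2 hn
  have hpow : sigmaSurf n * (n : ℝ) ^ ((n : ℝ) - 1)
      = (n : ℝ) ^ (n : ℝ) * (volume (ball (0 : Euc n) 1)).toReal := by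
    rw [sigmaSurf, Real.rpow_sub_one hn₀]
    field_simp
  rw [hpow, Real.mul_rpow (by positivity) ENNReal.toReal_nonneg, one_div,
    Real.rpow_rpow_inv (Nat.cast_nonneg _) hn₀, isoperimetricConst, finrank_euclideanSpace_fin]

lemma norm_gradient {H : Type*} [NormedAddCommGroup H] [InnerProductSpace ℝ H] [CompleteSpace H]
    (u : H → ℝ) (x : H) : ‖gradient u x‖ = ‖fderiv ℝ u x‖ := by
  simp [gradient]

end GradientNorm

end MoserTrudinger

open Module MoserTrudinger in
theorem stmt_8_general {E F : Type*} [NormedAddCommGroup E] [NormedSpace ℝ E]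
    [FiniteDimensional ℝ E] [MeasurableSpace E] [BorelSpace E] [NormedAddCommGroup F]
    [NormedSpace ℝ F] (μ : Measure E) [μ.IsAddHaarMeasure] (hd : 1 < finrank ℝ E) {Ω : Set E}
    (hΩ : μ Ω ≠ ⊤) {u : E → F} (hu : ContDiff ℝ 1 u) (hs : HasCompactSupport u)
    (hsub : Function.support u ⊆ Ω) :
    luxemburgExpNorm (μ.restrict Ω) ((finrank ℝ E : ℝ) / ((finrank ℝ E : ℝ) - 1)) u
      ≤ (isoperimetricConst μ)⁻¹ * ((μ Ω).toReal + 1) ^ (((finrank ℝ E : ℝ) - 1) / finrank ℝ E)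
        * (∫ x in Ω, ‖fderiv ℝ u x‖ ^ (finrank ℝ E : ℝ) ∂μ) ^ (1 / (finrank ℝ E : ℝ)) := by
  have : Nontrivial E := nontrivial_of_finrank_pos (one_pos.trans hd)
  have hc := isoperimetricConst_pos μ
  refine le_of_forall_gt_imp_ge_of_dense fun lam hlam => ?_
  set W := ((μ Ω).toReal + 1) ^ (((finrank ℝ E : ℝ) - 1) / finrank ℝ E)
  have hW : 0 < W := by positivity
  have hlam₀ : 0 < lam := hlam.trans_le' (by positivity)
  have hDu : (∫⁻ x in Ω, ‖fderiv ℝ u x‖ₑ ^ (finrank ℝ E : ℝ) ∂μ) ^ (1 / (finrank ℝ E : ℝ))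
      ≤ ENNReal.ofReal (isoperimetricConst μ * (lam / W)) := by
    rw [lintegral_enorm_rpow_rpow_eq_ofReal (hu.continuous_fderiv one_ne_zero) (hs.fderiv ℝ)
      (Nat.cast_pos.2 (one_pos.trans hd))]
    refine ENNReal.ofReal_le_ofReal ?_
    rw [← mul_div_assoc, le_div_iff₀' hW, ← inv_mul_le_iff₀ hc, ← mul_assoc]
    exact hlam.le
  exact (luxemburgExpNorm_restrict_le μ hd hΩ hu hs hsub (div_pos hlam₀ hW) hDu).trans_eq
    (mul_div_cancel₀ lam hW.ne')

/-- **Lemma 2.2 B (Moser–Trudinger inequality for `E_n` with explicit constant).**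
With `C_n = (σ n^{n-1})^{1/n}`, for every ball `B_R` and every `C¹` function `u`
compactly supported in `B_R`:
`‖u‖_{E_n,B_R} ≤ C_n⁻¹ (|B_R| + 1)^{(n-1)/n} ‖∇u‖_{L^n(B_R)}`. -/
theorem stmt_8 (n : ℕ) (hn : 2 ≤ n) :
    ∀ (z : Euc n) (R : ℝ), 0 < R →
    ∀ u : Euc n → ℝ, ContDiff ℝ 1 u → HasCompactSupport u → tsupport u ⊆ ball z R →
      expNorm n (n:ℝ) (ball z R) u
        ≤ ((sigmaSurf n * (n:ℝ) ^ ((n:ℝ)-1)) ^ (1/(n:ℝ)))⁻¹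
          * ((volume (ball z R)).toReal + 1) ^ (((n:ℝ)-1)/(n:ℝ))
          * (∫ x in ball z R, ‖gradient u x‖ ^ (n:ℝ)) ^ (1/(n:ℝ)) := by
  intro z R _ u hu hs hsub
  have h := stmt_8_general volume (by rwa [finrank_euclideanSpace_fin]) measure_ball_lt_top.ne hu hs
    ((subset_tsupport u).trans hsub)
  simpa only [finrank_euclideanSpace_fin, ← MoserTrudinger.expNorm_eq_luxemburgExpNorm,
    MoserTrudinger.isoperimetricConst_volume_euclideanSpace (by omega : n ≠ 0),
    ← MoserTrudinger.norm_gradient] using h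
end
end
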